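/- arXiv:2304.14169 — 3 statements merged into one kernel-verified Lean document; each statement's English description precedes it below -/
import Mathlib

section
/- Let s > 1/2 and 1 ≤ p < ∞. The problem of L_p-approximation on the classes F^{s,d}_mix is polynomially tractable. More precisely, for p ≥ 2 there is a constant C > 0, depending only on s and p, such that for all d ≥ 2 and ε ∈ (0, 1/2), n(ε, F^{s,d}_mix, L_p) ≤ C · d² · log(d) · ε^{-p} · log⁴(ε^{-1}). -/
open MeasureTheory Real Finset

noncomputable section

/-- The unit cube `[0,1]^d`. -/
def cube (d : ℕ) : Set (Fin d → ℝ) := Set.univ.pi fun _ => Set.Icc 0 1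

/-- The trigonometric character `e^{2πi⟨k,x⟩}`. -/
def eK (d : ℕ) (k : Fin d → ℤ) (x : Fin d → ℝ) : ℂ :=
  Complex.exp (2 * Real.pi * Complex.I * ∑ i, (k i : ℂ) * (x i : ℂ))

/-- The Fourier coefficient `f̂(k) = ∫_{[0,1]^d} f(x) e^{-2πi⟨k,x⟩} dx`. -/
def fCoeff (d : ℕ) (f : (Fin d → ℝ) → ℂ) (k : Fin d → ℤ) : ℂ :=
  ∫ x in cube d, f x * Complex.exp (-(2 * Real.pi * Complex.I) * ∑ i, (k i : ℂ) * (x i : ℂ))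

/-- `f` is 1-periodic in each coordinate. -/
def Periodic1 (d : ℕ) (f : (Fin d → ℝ) → ℂ) : Prop :=
  ∀ (x : Fin d → ℝ) (i : Fin d), f (Function.update x i (x i + 1)) = f x

/-- The weight `max(1, log ‖k‖_∞)`. -/
def logWeight (d : ℕ) (k : Fin d → ℤ) : ℝ :=
  max 1 (Real.log ((Finset.univ.sup fun i => (k i).natAbs : ℕ) : ℝ))

/-- The class `F_d^log` of continuous 1-periodic functions with
`∑_k |f̂(k)| max(1, log ‖k‖_∞) ≤ 1`. -/
def FdLog (d : ℕ) : Set ((Fin d → ℝ) → ℂ) :=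
  {f | Continuous f ∧ Periodic1 d f ∧
    Summable (fun k : Fin d → ℤ => ‖fCoeff d f k‖ * logWeight d k) ∧
    ∑' k : Fin d → ℤ, ‖fCoeff d f k‖ * logWeight d k ≤ 1}

/-- The mixed-smoothness weight `∏_{i=1}^d max(1, |k_i|^{2s})`. -/
def wMix (s : ℝ) (d : ℕ) (k : Fin d → ℤ) : ℝ :=
  ∏ i, max 1 (|(k i : ℝ)| ^ (2 * s))

/-- The unit ball `H^{s,d}_mix` of the Sobolev space of mixed smoothness `s`
(unweighted Korobov space). -/
def Hmix (s : ℝ) (d : ℕ) : Set ((Fin d → ℝ) → ℂ) :=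
  {f | Continuous f ∧ Periodic1 d f ∧
    Summable (fun k : Fin d → ℤ => ‖fCoeff d f k‖ ^ 2 * wMix s d k) ∧
    ∑' k : Fin d → ℤ, ‖fCoeff d f k‖ ^ 2 * wMix s d k ≤ 1}

/-- The class `F^{s,d}_mix` of functions in `H^{s,d}_mix` with absolutely summable
Fourier coefficients, `∑_k |f̂(k)| ≤ 1`. -/
def Fmix (s : ℝ) (d : ℕ) : Set ((Fin d → ℝ) → ℂ) :=
  {f | f ∈ Hmix s d ∧ Summable (fun k : Fin d → ℤ => ‖fCoeff d f k‖) ∧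
    ∑' k : Fin d → ℤ, ‖fCoeff d f k‖ ≤ 1}


section Prob

lemma aux_mgf {ι : Type*} [Fintype ι] (p X : ι → ℝ) (hp : ∀ i, 0 ≤ p i) (hs : ∑ i, p i = 1)
    (hX : ∀ i, |X i| ≤ 1) (l : ℝ) (hl0 : 0 ≤ l) (hl : l ≤ 1 / 2) :
    ∑ i, p i * Real.exp (l * (X i - ∑ j, p j * X j)) ≤ Real.exp (4 * l ^ 2) := by
  set c := ∑ j, p j * X j with hc
  have hcb : |c| ≤ 1 := by
    calc |c| ≤ ∑ j, |p j * X j| := Finset.abs_sum_le_sum_abs _ _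
      _ ≤ ∑ j, p j := by
          apply Finset.sum_le_sum
          intro j _
          rw [abs_mul, abs_of_nonneg (hp j)]
          nlinarith [hp j, hX j]
      _ = 1 := hs
  have key : ∀ i, Real.exp (l * (X i - c)) ≤ 1 + l * (X i - c) + 4 * l ^ 2 := by
    intro i
    have h1 : |X i - c| ≤ 2 := by
      have := abs_sub (X i) c
      linarith [hX i]
    have h2 : |l * (X i - c)| ≤ 1 := by
      rw [abs_mul, abs_of_nonneg hl0]
      nlinarith [abs_nonneg (X i - c)]
    have h3 := (abs_le.1 (Real.abs_exp_sub_one_sub_id_le h2)).2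
    have h4 : (X i - c) ^ 2 ≤ 4 := by
      rw [← sq_abs]; nlinarith [abs_nonneg (X i - c)]
    have : (l * (X i - c)) ^ 2 ≤ 4 * l ^ 2 := by
      rw [mul_pow]; nlinarith [sq_nonneg l]
    linarith
  calc ∑ i, p i * Real.exp (l * (X i - c)) ≤ ∑ i, p i * (1 + l * (X i - c) + 4 * l ^ 2) :=
        Finset.sum_le_sum fun i _ => mul_le_mul_of_nonneg_left (key i) (hp i)
    _ = ∑ i, ((1 - l * c + 4 * l ^ 2) * p i + l * (p i * X i)) := by
        apply Finset.sum_congr rfl; intro i _; ring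
    _ = 1 + 4 * l ^ 2 := by
        rw [Finset.sum_add_distrib, ← Finset.mul_sum, ← Finset.mul_sum, hs, ← hc]; ring
    _ ≤ _ := by linarith [Real.add_one_le_exp (4 * l ^ 2)]

lemma aux_hoeff {ι : Type*} [Fintype ι] (p X : ι → ℝ) (hp : ∀ i, 0 ≤ p i) (hs : ∑ i, p i = 1)
    (hX : ∀ i, |X i| ≤ 1) (m : ℕ) (r : ℝ) (hr0 : 0 ≤ r) (hr : r ≤ 1) :
    ∑ τ : Fin m → ι, (∏ j, p (τ j)) *
      (if m * r ≤ ∑ j, (X (τ j) - ∑ i, p i * X i) then (1 : ℝ) else 0)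
      ≤ Real.exp (-(m * r ^ 2 / 16)) := by
  set c := ∑ j, p j * X j with hc
  have h1 : ∀ τ : Fin m → ι, (∏ j, p (τ j)) *
      (if m * r ≤ ∑ j, (X (τ j) - c) then (1 : ℝ) else 0) ≤
      Real.exp (-(r / 8 * (m * r))) * ∏ j, (p (τ j) * Real.exp (r / 8 * (X (τ j) - c))) := by
    intro τ
    rw [Finset.prod_mul_distrib, ← Real.exp_sum, mul_left_comm, ← Real.exp_add]
    apply mul_le_mul_of_nonneg_left _ (Finset.prod_nonneg fun j _ => hp _)
    split_ifs with h
    · rw [← Finset.mul_sum]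
      apply Real.one_le_exp
      nlinarith
    · positivity
  calc _ ≤ ∑ τ : Fin m → ι, Real.exp (-(r / 8 * (m * r))) *
        ∏ j, (p (τ j) * Real.exp (r / 8 * (X (τ j) - c))) := Finset.sum_le_sum fun τ _ => h1 τ
    _ = Real.exp (-(r / 8 * (m * r))) * (∑ i, p i * Real.exp (r / 8 * (X i - c))) ^ m := by
        rw [← Finset.mul_sum, Fintype.sum_pow]
    _ ≤ Real.exp (-(r / 8 * (m * r))) * (Real.exp (4 * (r / 8) ^ 2)) ^ m := by
        gcongr
        · exact Finset.sum_nonneg fun i _ => mul_nonneg (hp i) (Real.exp_pos _).le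
        · exact aux_mgf p X hp hs hX (r / 8) (by linarith) (by linarith)
    _ = _ := by
        rw [← Real.exp_nat_mul, ← Real.exp_add]
        congr 1; ring

lemma aux_hoeffC {ι : Type*} [Fintype ι] (p : ι → ℝ) (U : ι → ℂ) (hp : ∀ i, 0 ≤ p i)
    (hs : ∑ i, p i = 1)
    (hU : ∀ i, ‖U i‖ ≤ 1) (m : ℕ) (r : ℝ) (hr0 : 0 ≤ r) (hr : r ≤ 1) :
    ∑ τ : Fin m → ι, (∏ j, p (τ j)) *
      (if m * r ≤ ‖∑ j, U (τ j) - m * ∑ i, (p i : ℂ) * U i‖ then (1 : ℝ) else 0)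
      ≤ 4 * Real.exp (-(m * r ^ 2 / 64)) := by
  classical
  set z := ∑ i, (p i : ℂ) * U i with hz
  have hre : z.re = ∑ i, p i * (U i).re := by simp [hz]
  have him : z.im = ∑ i, p i * (U i).im := by simp [hz]
  have a1 := aux_hoeff p (fun i => (U i).re) hp hs
    (fun i => (Complex.abs_re_le_norm _).trans (hU i)) m (r / 2) (by linarith) (by linarith)
  have a2 := aux_hoeff p (fun i => -(U i).re) hp hs
    (fun i => by rw [abs_neg]; exact (Complex.abs_re_le_norm _).trans (hU i)) m (r / 2)
    (by linarith) (by linarith)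
  have a3 := aux_hoeff p (fun i => (U i).im) hp hs
    (fun i => (Complex.abs_im_le_norm _).trans (hU i)) m (r / 2) (by linarith) (by linarith)
  have a4 := aux_hoeff p (fun i => -(U i).im) hp hs
    (fun i => by rw [abs_neg]; exact (Complex.abs_im_le_norm _).trans (hU i)) m (r / 2)
    (by linarith) (by linarith)
  simp only [mul_neg, Finset.sum_neg_distrib, ← hre, ← him] at a1 a2 a3 a4
  have e : Real.exp (-(m * (r / 2) ^ 2 / 16)) = Real.exp (-(m * r ^ 2 / 64)) := by
    congr 1; ring
  rw [e] at a1 a2 a3 a4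
  calc _ ≤ ∑ τ : Fin m → ι, ((∏ j, p (τ j)) *
          (if m * (r / 2) ≤ ∑ j, ((U (τ j)).re - z.re) then (1 : ℝ) else 0)
        + (∏ j, p (τ j)) *
          (if m * (r / 2) ≤ ∑ j, (-(U (τ j)).re - -z.re) then (1 : ℝ) else 0)
        + (∏ j, p (τ j)) *
          (if m * (r / 2) ≤ ∑ j, ((U (τ j)).im - z.im) then (1 : ℝ) else 0)
        + (∏ j, p (τ j)) *
          (if m * (r / 2) ≤ ∑ j, (-(U (τ j)).im - -z.im) then (1 : ℝ) else 0)) := by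
        apply Finset.sum_le_sum
        intro τ _
        simp only [← mul_add]
        apply mul_le_mul_of_nonneg_left _ (Finset.prod_nonneg fun j _ => hp _)
        simp only [Finset.sum_sub_distrib, Finset.sum_neg_distrib, Finset.sum_const,
          Finset.card_univ, Fintype.card_fin, nsmul_eq_mul]
        by_cases h : m * r ≤ ‖∑ j, U (τ j) - m * z‖
        · have h2 := Complex.norm_le_abs_re_add_abs_im (∑ j, U (τ j) - m * z)
          simp only [Complex.sub_re, Complex.sub_im, Complex.re_sum, Complex.im_sum,
            Complex.mul_re, Complex.mul_im, Complex.natCast_re, Complex.natCast_im, zero_mul,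
            sub_zero, add_zero] at h2
          rw [if_pos h]
          by_contra hcon
          push Not at hcon
          split_ifs at hcon <;> norm_num at hcon
          rename_i b1 b2 b3 b4
          have c1 : |∑ j, (U (τ j)).re - m * z.re| < m * (r / 2) := by
            rw [abs_lt]; constructor <;> linarith
          have c2 : |∑ j, (U (τ j)).im - m * z.im| < m * (r / 2) := by
            rw [abs_lt]; constructor <;> linarith
          linarith
        · rw [if_neg h]
          positivity
    _ ≤ _ := by
        simp only [Finset.sum_add_distrib]
        linarith

/-- Maurey selection. -/
lemma aux_maurey {ι X : Type*} [Fintype ι] [MeasurableSpace X] (ν : Measure X)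
    (p : ι → ℝ) (U : ι → X → ℂ) (hp : ∀ i, 0 ≤ p i)
    (hs : ∑ i, p i = 1) (hUm : ∀ i, Measurable (U i))
    (hU : ∀ i x, ‖U i x‖ ≤ 1) (m : ℕ) (r : ℝ) (hr0 : 0 ≤ r) (hr : r ≤ 1)
    (hν : ENNReal.ofReal (4 * Real.exp (-(m * r ^ 2 / 64))) * ν Set.univ < 1) :
    ∃ τ : Fin m → ι,
      ν {x | m * r ≤ ‖∑ j, U (τ j) x - m * ∑ i, (p i : ℂ) * U i x‖} < 1 := by
  classical
  by_contra hcon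
  push Not at hcon
  set B : (Fin m → ι) → Set X := fun τ =>
    {x | m * r ≤ ‖∑ j, U (τ j) x - m * ∑ i, (p i : ℂ) * U i x‖} with hB
  have hBm : ∀ τ, MeasurableSet (B τ) := by
    intro τ
    apply measurableSet_le measurable_const
    fun_prop
  have hw : ∀ τ : Fin m → ι, 0 ≤ ∏ j, p (τ j) := fun τ => Finset.prod_nonneg fun j _ => hp _
  have h1 : (1 : ENNReal) ≤ ∑ τ : Fin m → ι, ENNReal.ofReal (∏ j, p (τ j)) * ν (B τ) := by
    calc (1 : ENNReal) = ∑ τ : Fin m → ι, ENNReal.ofReal (∏ j, p (τ j)) := by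
          rw [← ENNReal.ofReal_sum_of_nonneg (fun τ _ => hw τ), ← Fintype.sum_pow, hs]; simp
      _ ≤ _ := by
          apply Finset.sum_le_sum
          intro τ _
          exact le_mul_of_one_le_right zero_le (hcon τ)
  have h2 : ∑ τ : Fin m → ι, ENNReal.ofReal (∏ j, p (τ j)) * ν (B τ) ≤
      ∫⁻ x, ENNReal.ofReal (4 * Real.exp (-(m * r ^ 2 / 64))) ∂ν := by
    calc _ = ∑ τ : Fin m → ι, ∫⁻ x, (B τ).indicator
            (fun _ => ENNReal.ofReal (∏ j, p (τ j))) x ∂ν := by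
          apply Finset.sum_congr rfl
          intro τ _
          rw [lintegral_indicator_const (hBm τ)]
      _ = ∫⁻ x, ∑ τ : Fin m → ι, (B τ).indicator
            (fun _ => ENNReal.ofReal (∏ j, p (τ j))) x ∂ν := by
          rw [lintegral_finsetSum]
          intro τ _
          exact measurable_const.indicator (hBm τ)
      _ ≤ _ := by
          apply lintegral_mono
          intro x
          have h3 := aux_hoeffC p (fun i => U i x) hp hs (fun i => hU i x) m r hr0 hr
          refine le_trans (le_of_eq ?_) (ENNReal.ofReal_le_ofReal h3)
          rw [ENNReal.ofReal_sum_of_nonneg]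
          · apply Finset.sum_congr rfl
            intro τ _
            by_cases hx : x ∈ B τ
            · have hx' : m * r ≤ ‖∑ j, U (τ j) x - m * ∑ i, (p i : ℂ) * U i x‖ := hx
              rw [Set.indicator_of_mem hx, if_pos hx', mul_one]
            · have hx' : ¬ (m * r ≤ ‖∑ j, U (τ j) x - m * ∑ i, (p i : ℂ) * U i x‖) := hx
              rw [Set.indicator_of_notMem hx, if_neg hx']; simp
          · intro τ _
            apply mul_nonneg (hw τ)
            split_ifs <;> norm_num
  rw [lintegral_const] at h2
  exact absurd (h1.trans h2) (not_le.2 hν)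

/-- Hitting sets. -/
lemma aux_hit {ι X : Type*} [Fintype ι] [MeasurableSpace X] (μ : Measure X)
    [IsProbabilityMeasure μ] (S : Set X) (hS : μ S = 1) (B : ι → Set X)
    (hB : ∀ i, MeasurableSet (B i)) (β : ι → ℝ) (n : ℕ)
    (hsum : ∑ i, Real.exp (-(n * β i)) < 1) :
    ∃ x : Fin n → X, (∀ j, x j ∈ S) ∧ ∀ i, β i ≤ μ.real (B i) → ∃ j, x j ∈ B i := by
  classical
  by_contra hcon
  push Not at hcon
  have hsub : Set.univ.pi (fun _ : Fin n => S) ⊆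
      ⋃ i ∈ (Finset.univ.filter fun i => β i ≤ μ.real (B i)),
        Set.univ.pi (fun _ : Fin n => (B i)ᶜ) := by
    intro x hx
    obtain ⟨i, hi, hi2⟩ := hcon x (fun j => hx j (Set.mem_univ j))
    simp only [Set.mem_iUnion]
    exact ⟨i, by simp [hi], fun j _ => hi2 j⟩
  have h1 := measure_mono (μ := Measure.pi fun _ : Fin n => μ) hsub
  rw [Measure.pi_pi] at h1
  simp only [hS, Finset.prod_const_one] at h1
  have h2 := h1.trans (measure_biUnion_finset_le _ _)
  have h3 : ∀ i ∈ (Finset.univ.filter fun i => β i ≤ μ.real (B i)),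
      (Measure.pi fun _ : Fin n => μ) (Set.univ.pi (fun _ : Fin n => (B i)ᶜ)) ≤
        ENNReal.ofReal (Real.exp (-(n * β i))) := by
    intro i hi
    have hi : β i ≤ μ.real (B i) := by simpa using hi
    rw [Measure.pi_pi]
    simp only [Finset.prod_const, Finset.card_univ, Fintype.card_fin]
    have : μ (B i)ᶜ = ENNReal.ofReal (1 - μ.real (B i)) := by
      rw [← probReal_compl_eq_one_sub (hB i)]
      simp
    rw [this, ← ENNReal.ofReal_pow (by linarith [measureReal_le_one (μ := μ) (s := B i)])]
    apply ENNReal.ofReal_le_ofReal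
    calc (1 - μ.real (B i)) ^ n ≤ (Real.exp (- β i)) ^ n := by
          apply pow_le_pow_left₀ (by linarith [measureReal_le_one (μ := μ) (s := B i)])
          linarith [Real.add_one_le_exp (- β i)]
      _ = _ := by rw [← Real.exp_nat_mul]; congr 1; ring
  have h4 := h2.trans (Finset.sum_le_sum h3)
  rw [← ENNReal.ofReal_sum_of_nonneg (fun i _ => (Real.exp_pos _).le)] at h4
  have h5 : ∑ i ∈ (Finset.univ.filter fun i => β i ≤ μ.real (B i)), Real.exp (-(n * β i)) < 1 :=
    lt_of_le_of_lt (Finset.sum_le_sum_of_subset_of_nonneg (Finset.filter_subset _ _)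
      (fun i _ _ => (Real.exp_pos _).le)) hsum
  exact absurd h4 (not_le.2 (by rw [← ENNReal.ofReal_one]; exact (ENNReal.ofReal_lt_ofReal_iff one_pos).2 h5))

/-- Splitting into four phases. -/
lemma aux_phase {κ : Type*} [Fintype κ] [Nonempty κ] (a : κ → ℂ) (ha : ∑ k, ‖a k‖ ≤ 1) :
    ∃ p : κ × Fin 4 → ℝ, (∀ i, 0 ≤ p i) ∧ ∑ i, p i = 1 ∧
      ∀ e : κ → ℂ, ∑ i, (p i : ℂ) * (Complex.I ^ (i.2 : ℕ) * e i.1) = (∑ k, a k * e k) / 2 := by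
  set c : κ → Fin 4 → ℝ := fun k =>
    ![max (a k).re 0, max (a k).im 0, max (-(a k).re) 0, max (-(a k).im) 0] with hc
  have hcn : ∀ k q, 0 ≤ c k q := by
    intro k q
    fin_cases q <;> simp [hc]
  have hcs : ∀ k, ∑ q, c k q ≤ 2 * ‖a k‖ := by
    intro k
    have h1 := Complex.abs_re_le_norm (a k)
    have h2 := Complex.abs_im_le_norm (a k)
    have e : ∀ y : ℝ, max y 0 + max (-y) 0 = |y| := by
      intro y
      rcases le_total 0 y with h | h
      · rw [max_eq_left h, max_eq_right (by linarith), abs_of_nonneg h, add_zero]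
      · rw [max_eq_right h, max_eq_left (by linarith), abs_of_nonpos h, zero_add]
    simp only [hc, Fin.sum_univ_four]
    have e1 := e (a k).re
    have e2 := e (a k).im
    simp
    linarith
  have hce : ∀ k, ∑ q, (c k q : ℂ) * Complex.I ^ (q : ℕ) = a k := by
    intro k
    have e : ∀ y : ℝ, max y 0 - max (-y) 0 = y := by
      intro y
      rcases le_total 0 y with h | h
      · rw [max_eq_left h, max_eq_right (by linarith), sub_zero]
      · rw [max_eq_right h, max_eq_left (by linarith)]; ring
    simp only [hc, Fin.sum_univ_four]
    have e1 := e (a k).re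
    have e2 := e (a k).im
    apply Complex.ext
    · simp [pow_succ]; linarith
    · simp [pow_succ]; linarith
  set L : ℝ := 1 - ∑ k, ∑ q, c k q / 2 with hL
  have hL0 : 0 ≤ L := by
    have : ∑ k, ∑ q, c k q / 2 ≤ ∑ k, ‖a k‖ := by
      apply Finset.sum_le_sum
      intro k _
      rw [← Finset.sum_div]
      linarith [hcs k]
    linarith
  have hN : (0 : ℝ) < Fintype.card κ := by exact_mod_cast Fintype.card_pos
  refine ⟨fun i => c i.1 i.2 / 2 + L / (4 * Fintype.card κ), ?_, ?_, ?_⟩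
  · intro i
    have := hcn i.1 i.2
    positivity
  · rw [Fintype.sum_prod_type]
    simp only [Finset.sum_add_distrib, Finset.sum_const, Finset.card_univ, Fintype.card_fin,
      nsmul_eq_mul]
    push_cast
    field_simp
    rw [hL]
    field_simp
    simp only [← Finset.sum_div]
    ring
  · intro e
    rw [Fintype.sum_prod_type, Finset.sum_div]
    apply Finset.sum_congr rfl
    intro k _
    have h0 : ∑ q : Fin 4, Complex.I ^ (q : ℕ) = 0 := by
      simp [Fin.sum_univ_four, pow_succ]
    calc ∑ q : Fin 4, ((c k q / 2 + L / (4 * Fintype.card κ) : ℝ) : ℂ) *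
          (Complex.I ^ (q : ℕ) * e k)
        = (∑ q : Fin 4, (c k q : ℂ) * Complex.I ^ (q : ℕ)) * (e k / 2) +
          (∑ q : Fin 4, Complex.I ^ (q : ℕ)) * (((L / (4 * Fintype.card κ) : ℝ) : ℂ) * e k) := by
          rw [Finset.sum_mul, Finset.sum_mul, ← Finset.sum_add_distrib]
          apply Finset.sum_congr rfl
          intro q _
          push_cast
          ring
      _ = _ := by rw [h0, hce k]; ring

end Prob

section Four

lemma aux_per_int {d : ℕ} {f : (Fin d → ℝ) → ℂ} (hf : Periodic1 d f) (x : Fin d → ℝ) (i : Fin d)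
    (n : ℤ) : f (Function.update x i (x i + n)) = f x := by
  have h : ∀ (n : ℕ) (x : Fin d → ℝ), f (Function.update x i (x i + n)) = f x := by
    intro n
    induction n with
    | zero => intro x; simp
    | succ n ih =>
      intro x
      have := hf (Function.update x i (x i + n)) i
      rw [ih x] at this
      rw [← this]
      simp [add_assoc]
  obtain ⟨m, rfl | rfl⟩ := n.eq_nat_or_neg
  · exact_mod_cast h m x
  · have := h m (Function.update x i (x i + ((-(m : ℤ) : ℤ) : ℝ)))
    rw [← this]
    simp

lemma aux_per {d : ℕ} {f : (Fin d → ℝ) → ℂ} (hf : Periodic1 d f) (y z : Fin d → ℝ)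
    (h : ∀ i, ∃ n : ℤ, z i = y i + n) : f z = f y := by
  classical
  have key : ∀ S : Finset (Fin d), f (fun i => if i ∈ S then z i else y i) = f y := by
    intro S
    induction S using Finset.induction_on with
    | empty => simp
    | insert a S ha ih =>
      obtain ⟨n, hn⟩ := h a
      rw [← ih]
      refine Eq.trans ?_ (aux_per_int hf (fun i => if i ∈ S then z i else y i) a n)
      congr 1
      funext i
      by_cases hi : i = a
      · subst hi; simp [ha, hn]
      · simp [hi]
  have := key Finset.univ
  simpa using this

lemma aux_mF {d : ℕ} (k : Fin d → ℤ) (x : Fin d → ℝ) :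
    UnitAddTorus.mFourier k (fun i => (x i : UnitAddCircle)) = eK d k x := by
  simp only [UnitAddTorus.mFourier, ContinuousMap.coe_mk, fourier_coe_apply, eK]
  rw [← Complex.exp_sum, Finset.mul_sum]
  congr 1
  apply Finset.sum_congr rfl
  intro i _
  simp
  ring

lemma aux_cube_ae (d : ℕ) :
    {x : Fin d → ℝ | ∀ i, x i ∈ Set.Ioc ((0 : Fin d → ℝ) i) ((0 : Fin d → ℝ) i + 1)}
      =ᵐ[volume] cube d := by
  have h := Measure.univ_pi_Ioc_ae_eq_Icc (μ := fun _ : Fin d => (volume : Measure ℝ))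
    (f := 0) (g := 1)
  have e1 : {x : Fin d → ℝ | ∀ i, x i ∈ Set.Ioc ((0 : Fin d → ℝ) i) ((0 : Fin d → ℝ) i + 1)} =
      Set.univ.pi fun i => Set.Ioc ((0 : Fin d → ℝ) i) ((1 : Fin d → ℝ) i) := by
    ext x; simp [Set.mem_pi]
  have e2 : cube d = Set.Icc (0 : Fin d → ℝ) 1 := by
    rw [cube, ← Set.pi_univ_Icc]; rfl
  rw [e1, e2]
  exact h

lemma aux_fourier {d : ℕ} {f : (Fin d → ℝ) → ℂ} (hc : Continuous f) (hf : Periodic1 d f)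
    (hs : Summable fun k : Fin d → ℤ => ‖fCoeff d f k‖) (x : Fin d → ℝ) :
    HasSum (fun k => fCoeff d f k * eK d k x) (f x) := by
  set pr : (Fin d → ℝ) → UnitAddTorus (Fin d) := fun x i => (x i : UnitAddCircle) with hpr
  have hq : IsOpenQuotientMap pr :=
    IsOpenQuotientMap.piMap (f := fun (_ : Fin d) (t : ℝ) => (t : UnitAddCircle))
      (fun _ => QuotientAddGroup.isOpenQuotientMap_mk)
  set F0 : UnitAddTorus (Fin d) → ℂ := fun y => f (Function.surjInv hq.surjective y) with hF0
  have hF : ∀ x, F0 (pr x) = f x := by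
    intro x
    apply aux_per hf
    intro i
    have h1 := Function.surjInv_eq hq.surjective (pr x)
    have h2 := congrFun h1 i
    have h3 : ((Function.surjInv hq.surjective (pr x) i : ℝ) : UnitAddCircle) = (x i : ℝ) := h2
    rw [← sub_eq_zero, ← AddCircle.coe_sub, AddCircle.coe_eq_zero_iff] at h3
    obtain ⟨n, hn⟩ := h3
    refine ⟨n, ?_⟩
    simp only [zsmul_eq_mul, mul_one] at hn
    linarith
  have hF0c : Continuous F0 := by
    rw [hq.isQuotientMap.continuous_iff]
    have : F0 ∘ pr = f := funext hF
    rwa [this]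
  let F : C(UnitAddTorus (Fin d), ℂ) := ⟨F0, hF0c⟩
  have hco : ∀ k, UnitAddTorus.mFourierCoeff F k = fCoeff d f k := by
    intro k
    rw [UnitAddTorus.mFourierCoeff_eq_integral _ _ (0 : Fin d → ℝ), fCoeff,
      setIntegral_congr_set (aux_cube_ae d)]
    apply integral_congr_ae
    filter_upwards with x
    have h1 := aux_mF (-k) x
    have h2 : F (fun i => (x i : UnitAddCircle)) = f x := hF x
    rw [h1, h2, eK, smul_eq_mul, mul_comm]
    congr 2
    simp
  have hs2 : Summable (UnitAddTorus.mFourierCoeff F) := by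
    rw [funext hco]
    exact hs.of_norm
  have := UnitAddTorus.hasSum_mFourier_series_apply_of_summable hs2 (pr x)
  have h2 : F (pr x) = f x := hF x
  rw [h2] at this
  convert this using 2 with k
  rw [hco k, smul_eq_mul]
  congr 1
  exact (aux_mF k x).symm

lemma aux_eK_norm (d : ℕ) (k : Fin d → ℤ) (x : Fin d → ℝ) : ‖eK d k x‖ = 1 := by
  rw [eK, Complex.norm_exp]
  have : (2 * Real.pi * Complex.I * ∑ i, (k i : ℂ) * (x i : ℂ)) =
    ((2 * Real.pi * ∑ i, (k i : ℝ) * (x i : ℝ) : ℝ) : ℂ) * Complex.I := by push_cast; ring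
  rw [this]
  simp

lemma aux_eK_cont (d : ℕ) (k : Fin d → ℤ) : Continuous (eK d k) := by
  unfold eK
  fun_prop

end Four

section Tail

lemma aux_Z (γ : ℝ) (hγ : 0 < γ) :
    Summable fun k : ℤ => (max 1 (|(k : ℝ)| ^ (1 + γ)))⁻¹ := by
  have h := Real.summable_abs_int_rpow (b := 1 + γ) (by linarith)
  have h2 : Summable fun k : ℤ => (if k = 0 then (1 : ℝ) else 0) :=
    summable_of_hasFiniteSupport (Set.Finite.subset (Set.finite_singleton 0) (by
      intro k hk; by_contra h0; simp at h0; simp [h0] at hk))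
  refine Summable.of_nonneg_of_le (fun k => by positivity) (fun k => ?_) (h.add h2)
  by_cases hk : k = 0
  · subst hk
    have : (0 : ℝ) ≤ |((0 : ℤ) : ℝ)| ^ (-(1 + γ)) := by positivity
    have h3 : (max 1 (|((0 : ℤ) : ℝ)| ^ (1 + γ)))⁻¹ ≤ 1 := inv_le_one_of_one_le₀ (le_max_left _ _)
    refine h3.trans ?_
    simp only [if_true]
    exact le_add_of_nonneg_left this
  · have hk' : 0 < |(k : ℝ)| := by simpa using hk
    rw [Real.rpow_neg hk'.le]
    simp only [hk, if_false, add_zero]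
    apply inv_anti₀ (by positivity) (le_max_right _ _)

lemma aux_prodsum (d : ℕ) (z : ℤ → ℝ) (hz : ∀ k, 0 ≤ z k) (hs : Summable z)
    (T : Finset (Fin d → ℤ)) : ∑ k ∈ T, ∏ i, z (k i) ≤ (∑' k, z k) ^ d := by
  classical
  set S : Finset ℤ := T.biUnion fun k => Finset.univ.image k with hS
  calc ∑ k ∈ T, ∏ i, z (k i) ≤ ∑ k ∈ Fintype.piFinset fun _ : Fin d => S, ∏ i, z (k i) := by
        apply Finset.sum_le_sum_of_subset_of_nonneg
        · intro k hk
          rw [Fintype.mem_piFinset]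
          intro i
          rw [hS, Finset.mem_biUnion]
          exact ⟨k, hk, by simp⟩
        · intro k _ _
          exact Finset.prod_nonneg fun i _ => hz _
    _ = (∑ k ∈ S, z k) ^ d := by
        rw [Finset.sum_prod_piFinset]; simp
    _ ≤ _ := by
        gcongr
        · exact Finset.sum_nonneg fun k _ => hz k
        · exact hs.sum_le_tsum _ (fun k _ => hz k)

lemma aux_wtail (s : ℝ) (hs : 1 / 2 < s) (d M : ℕ) (hM : 1 ≤ M) (T : Finset (Fin d → ℤ))
    (hT : ∀ k ∈ T, ∃ i, (M : ℤ) < |k i|) :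
    ∑ k ∈ T, (wMix s d k)⁻¹ ≤
      ((M : ℝ) ^ (s - 1 / 2))⁻¹ * (∑' k : ℤ, (max 1 (|(k : ℝ)| ^ (1 + (s - 1 / 2))))⁻¹) ^ d := by
  set γ := s - 1 / 2 with hγ
  have hγ0 : 0 < γ := by rw [hγ]; linarith
  have key := aux_prodsum d (fun k : ℤ => (max 1 (|(k : ℝ)| ^ (1 + γ)))⁻¹)
    (fun k => by positivity) (aux_Z γ hγ0) T
  refine le_trans ?_ (mul_le_mul_of_nonneg_left key (by positivity))
  rw [Finset.mul_sum]
  apply Finset.sum_le_sum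
  intro k hk
  obtain ⟨i0, hi0⟩ := hT k hk
  rw [Finset.prod_inv_distrib, ← mul_inv]
  have hMp : (0 : ℝ) < M := by exact_mod_cast hM
  apply inv_anti₀ (by positivity)
  have e : ∀ i, max 1 (|(k i : ℝ)| ^ (2 * s)) =
      max 1 (|(k i : ℝ)| ^ γ) * max 1 (|(k i : ℝ)| ^ (1 + γ)) := by
    intro i
    have e2 : 2 * s = γ + (1 + γ) := by rw [hγ]; ring
    by_cases h0 : k i = 0
    · simp only [h0, Int.cast_zero, abs_zero]
      rw [Real.zero_rpow (by linarith), Real.zero_rpow (by linarith), Real.zero_rpow (by linarith)]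
      simp
    · have h1 : (1 : ℝ) ≤ |(k i : ℝ)| := by exact_mod_cast Int.one_le_abs h0
      rw [max_eq_right (Real.one_le_rpow h1 (by linarith)),
        max_eq_right (Real.one_le_rpow h1 (by linarith)),
        max_eq_right (Real.one_le_rpow h1 (by linarith)), e2, Real.rpow_add (by linarith)]
  rw [wMix, Finset.prod_congr rfl (fun i _ => e i), Finset.prod_mul_distrib]
  apply mul_le_mul_of_nonneg_right
  · have h2 : (M : ℝ) ^ γ ≤ max 1 (|(k i0 : ℝ)| ^ γ) := by
      apply le_max_of_le_right
      apply Real.rpow_le_rpow hMp.le _ hγ0.le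
      exact_mod_cast hi0.le
    refine h2.trans ?_
    rw [← Finset.mul_prod_erase Finset.univ (fun i => max 1 (|(k i : ℝ)| ^ γ)) (Finset.mem_univ i0)]
    apply le_mul_of_one_le_right (by positivity)
    exact Finset.prod_induction _ (fun y : ℝ => 1 ≤ y) (fun a b ha hb => one_le_mul_of_one_le_of_one_le ha hb)
      le_rfl (fun i _ => le_max_left _ _)
  · exact Finset.prod_nonneg fun i _ => by positivity

lemma aux_wpos (s : ℝ) (d : ℕ) (k : Fin d → ℤ) : 0 < wMix s d k :=
  Finset.prod_pos fun i _ => by positivity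

/-- the coefficient class -/
structure Coef (s : ℝ) (d : ℕ) (h : (Fin d → ℝ) → ℂ) (a : (Fin d → ℤ) → ℂ) : Prop where
  sum1 : ∀ T : Finset (Fin d → ℤ), ∑ k ∈ T, ‖a k‖ ≤ 1
  sum2 : ∀ T : Finset (Fin d → ℤ), ∑ k ∈ T, ‖a k‖ ^ 2 * wMix s d k ≤ 1
  ser : ∀ x, HasSum (fun k => a k * eK d k x) (h x)
  cont : Continuous h

lemma aux_coef {s : ℝ} {d : ℕ} {f : (Fin d → ℝ) → ℂ} (hf : f ∈ Fmix s d) :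
    Coef s d f (fCoeff d f) := by
  obtain ⟨⟨hc, hp, h1, h2⟩, h3, h4⟩ := hf
  exact ⟨fun T => (h3.sum_le_tsum T fun k _ => norm_nonneg _).trans h4,
    fun T => (h1.sum_le_tsum T fun k _ => mul_nonneg (sq_nonneg _) (aux_wpos s d k).le).trans h2,
    aux_fourier hc hp h3, hc⟩

lemma aux_coef_sub {s : ℝ} {d : ℕ} {f g : (Fin d → ℝ) → ℂ} {a b : (Fin d → ℤ) → ℂ}
    (hf : Coef s d f a) (hg : Coef s d g b) :
    Coef s d (fun x => (f x - g x) / 2) (fun k => (a k - b k) / 2) := by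
  have hn : ∀ k, ‖(a k - b k) / 2‖ ≤ (‖a k‖ + ‖b k‖) / 2 := by
    intro k
    rw [norm_div, Complex.norm_ofNat]
    linarith [norm_sub_le (a k) (b k)]
  refine ⟨fun T => ?_, fun T => ?_, fun x => ?_, ?_⟩
  · calc _ ≤ ∑ k ∈ T, (‖a k‖ + ‖b k‖) / 2 := Finset.sum_le_sum fun k _ => hn k
      _ ≤ 1 := by
        rw [← Finset.sum_div, Finset.sum_add_distrib]
        linarith [hf.sum1 T, hg.sum1 T]
  · calc _ ≤ ∑ k ∈ T, (‖a k‖ ^ 2 * wMix s d k + ‖b k‖ ^ 2 * wMix s d k) / 2 := by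
          apply Finset.sum_le_sum
          intro k _
          have h1 : ‖(a k - b k) / 2‖ ^ 2 ≤ (‖a k‖ ^ 2 + ‖b k‖ ^ 2) / 2 := by
            have := pow_le_pow_left₀ (norm_nonneg _) (hn k) 2
            nlinarith [sq_nonneg (‖a k‖ - ‖b k‖)]
          have := mul_le_mul_of_nonneg_right h1 (aux_wpos s d k).le
          linarith
      _ ≤ 1 := by
        rw [← Finset.sum_div, Finset.sum_add_distrib]
        linarith [hf.sum2 T, hg.sum2 T]
  · have := ((hf.ser x).sub (hg.ser x)).div_const 2
    have e : (fun k => (a k - b k) / 2 * eK d k x) =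
        fun k => (a k * eK d k x - b k * eK d k x) / 2 := by
      funext k; ring
    rw [e]
    exact this
  · have := hf.cont
    have := hg.cont
    fun_prop

lemma aux_coef_le {s : ℝ} {d : ℕ} {h : (Fin d → ℝ) → ℂ} {a : (Fin d → ℤ) → ℂ}
    (hh : Coef s d h a) (x : Fin d → ℝ) : ‖h x‖ ≤ 1 := by
  refine le_of_tendsto (hh.ser x).norm (Filter.Eventually.of_forall fun T => ?_)
  refine (norm_sum_le _ _).trans (le_trans (Finset.sum_le_sum fun k _ => ?_) (hh.sum1 T))
  rw [norm_mul, aux_eK_norm, mul_one]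

/-- the frequency box -/
def boxL (d M : ℕ) : Finset (Fin d → ℤ) := Fintype.piFinset fun _ => Finset.Icc (-(M : ℤ)) M

lemma aux_trunc {s : ℝ} (hs : 1 / 2 < s) {d M : ℕ} (hM : 1 ≤ M) {h : (Fin d → ℝ) → ℂ}
    {a : (Fin d → ℤ) → ℂ} (hh : Coef s d h a) (η : ℝ) (hη0 : 0 ≤ η)
    (hη : ((M : ℝ) ^ (s - 1 / 2))⁻¹ *
      (∑' k : ℤ, (max 1 (|(k : ℝ)| ^ (1 + (s - 1 / 2))))⁻¹) ^ d ≤ η ^ 2) (x : Fin d → ℝ) :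
    ‖h x - ∑ k ∈ boxL d M, a k * eK d k x‖ ≤ η := by
  classical
  have ht := ((hh.ser x).sub_const (∑ k ∈ boxL d M, a k * eK d k x)).norm
  refine le_of_tendsto ht ?_
  filter_upwards [Filter.eventually_ge_atTop (boxL d M)] with T hT
  rw [← Finset.sum_sdiff hT, add_sub_cancel_right]
  have hT2 : ∀ k ∈ T \ boxL d M, ∃ i, (M : ℤ) < |k i| := by
    intro k hk
    have h1 := (Finset.mem_sdiff.1 hk).2
    by_contra hcon
    push Not at hcon
    apply h1
    rw [boxL, Fintype.mem_piFinset]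
    intro i
    rw [Finset.mem_Icc]
    exact abs_le.1 (hcon i)
  calc _ ≤ ∑ k ∈ T \ boxL d M, ‖a k‖ := by
        refine (norm_sum_le _ _).trans (Finset.sum_le_sum fun k _ => ?_)
        rw [norm_mul, aux_eK_norm, mul_one]
    _ ≤ η := by
        apply le_of_sq_le_sq _ hη0
        refine le_trans (Finset.sum_sq_le_sum_mul_sum_of_sq_le_mul _
          (f := fun k => ‖a k‖ ^ 2 * wMix s d k) (g := fun k => (wMix s d k)⁻¹) ?_ ?_ ?_) ?_
        · intro k _
          exact mul_nonneg (sq_nonneg _) (aux_wpos s d k).le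
        · intro k _
          exact (inv_pos.2 (aux_wpos s d k)).le
        · intro k _
          rw [mul_assoc, mul_inv_cancel₀ (aux_wpos s d k).ne', mul_one]
        · have h1 := hh.sum2 (T \ boxL d M)
          have h2 := (aux_wtail s hs d M hM _ hT2).trans hη
          have h3 : 0 ≤ ∑ k ∈ T \ boxL d M, (wMix s d k)⁻¹ :=
            Finset.sum_nonneg fun k _ => (inv_pos.2 (aux_wpos s d k)).le
          nlinarith

lemma aux_box_card (d M : ℕ) : (boxL d M).card = (2 * M + 1) ^ d := by
  rw [boxL, Fintype.card_piFinset]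
  simp
  congr 1
  omega

end Tail

section Core

lemma aux_cube_prob (d : ℕ) : IsProbabilityMeasure (volume.restrict (cube d)) := by
  constructor
  rw [Measure.restrict_apply_univ, cube, volume_pi_pi]
  simp

lemma aux_cube_meas (d : ℕ) : MeasurableSet (cube d) :=
  MeasurableSet.univ_pi fun _ => measurableSet_Icc

lemma aux_core (s : ℝ) (hs : 1 / 2 < s) (d M J k n : ℕ) (hM : 1 ≤ M)
    (hη : ((M : ℝ) ^ (s - 1 / 2))⁻¹ *
      (∑' k : ℤ, (max 1 (|(k : ℝ)| ^ (1 + (s - 1 / 2))))⁻¹) ^ d ≤ ((1 / 2 : ℝ) ^ J / 8) ^ 2)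
    (h1 : 4 * Real.exp (-(k : ℝ)) * (n + 8 * (J + 1) * 4 ^ J) < 1)
    (h2 : 8 * (J + 1) * 4 ^ J *
      (2 ^ 14 * k * Real.log (4 * (2 * (M : ℝ) + 1) ^ d) + (J + 1)) ≤ n) :
    ∃ x : Fin n → (Fin d → ℝ), (∀ i, x i ∈ cube d) ∧
      ∀ (h : (Fin d → ℝ) → ℂ) (a : (Fin d → ℤ) → ℂ), Coef s d h a → (∀ i, h (x i) = 0) →
        ∀ j ≤ J, (volume.restrict (cube d)).real {x | (1 / 2 : ℝ) ^ j ≤ ‖h x‖} ≤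
          4 ^ j / (4 * (J + 1) * 4 ^ J) := by
  classical
  have hprob := aux_cube_prob d
  set μ := volume.restrict (cube d) with hμ
  have hcube : μ (cube d) = 1 := by
    rw [hμ, Measure.restrict_apply_self, cube, volume_pi_pi]; simp
  have hkpos : 0 < k := by
    rcases Nat.eq_zero_or_pos k with h | h
    · subst h
      have : (1 : ℝ) ≤ 4 ^ J := one_le_pow₀ (by norm_num)
      simp at h1
      have hn : (0 : ℝ) ≤ n := Nat.cast_nonneg n
      have hJ : (0 : ℝ) ≤ J := Nat.cast_nonneg J
      nlinarith
    · exact h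
  set c : ℝ := 8 * (J + 1) * 4 ^ J with hc
  have hcpos : 0 < c := by positivity
  let m : ℕ → ℕ := fun j => 2 ^ 14 * k * 4 ^ j
  have hmpos : ∀ j, (0 : ℝ) < m j := by
    intro j
    have : 0 < m j := by positivity
    exact_mod_cast this
  let U : (boxL d M) × Fin 4 → (Fin d → ℝ) → ℂ := fun i x => Complex.I ^ (i.2 : ℕ) * eK d i.1 x
  have hUc : ∀ i, Continuous (U i) := fun i => continuous_const.mul (aux_eK_cont d _)
  have hU1 : ∀ i x, ‖U i x‖ ≤ 1 := by
    intro i x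
    simp [U, aux_eK_norm]
  let B : (Σ j : Fin (J + 1), (Fin (m j) → (boxL d M) × Fin 4)) → Set (Fin d → ℝ) :=
    fun q => {x | m q.1 * ((1 / 2 : ℝ) ^ (q.1 : ℕ) / 4) ≤ ‖∑ i, U (q.2 i) x‖}
  have hBm : ∀ q, MeasurableSet (B q) := by
    intro q
    apply measurableSet_le measurable_const
    have : Continuous fun x => ‖∑ i, U (q.2 i) x‖ :=
      (continuous_finsetSum _ fun i _ => hUc _).norm
    exact this.measurable
  have hD : Fintype.card ((boxL d M) × Fin 4) = 4 * (2 * M + 1) ^ d := by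
    rw [Fintype.card_prod, Fintype.card_coe, aux_box_card, Fintype.card_fin, mul_comm]
  set D : ℝ := 4 * (2 * (M : ℝ) + 1) ^ d with hDdef
  have hDpos : 0 < D := by positivity
  have hsum : ∑ q : (Σ j : Fin (J + 1), (Fin (m j) → (boxL d M) × Fin 4)),
      Real.exp (-(n * (4 ^ (q.1 : ℕ) / c))) < 1 := by
    rw [Fintype.sum_sigma]
    calc _ ≤ ∑ j : Fin (J + 1), Real.exp (-((J : ℝ) + 1)) := by
          apply Finset.sum_le_sum
          intro j _
          simp only [Finset.sum_const, Finset.card_univ, Fintype.card_fun, Fintype.card_fin,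
            nsmul_eq_mul, hD]
          push_cast
          rw [← hDdef, ← Real.exp_log hDpos, ← Real.exp_nat_mul, ← Real.exp_add]
          apply Real.exp_le_exp.2
          have e1 : (m j : ℝ) = 2 ^ 14 * k * 4 ^ (j : ℕ) := by simp only [m]; push_cast; ring
          rw [e1]
          have e2 : (4 : ℝ) ^ (j : ℕ) * (2 ^ 14 * k * Real.log D + (J + 1)) ≤
              n * (4 ^ (j : ℕ) / c) := by
            have : (2 ^ 14 * k * Real.log D + (J + 1)) ≤ n / c := by
              rw [le_div_iff₀ hcpos]; linarith
            have h4 := mul_le_mul_of_nonneg_left this (by positivity : (0 : ℝ) ≤ 4 ^ (j : ℕ))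
            calc _ ≤ _ := h4
              _ = _ := by ring
          have e3 : (1 : ℝ) ≤ 4 ^ (j : ℕ) := one_le_pow₀ (by norm_num)
          have e4 : (J : ℝ) + 1 ≤ 4 ^ (j : ℕ) * (J + 1) := by
            have hJ : (0 : ℝ) ≤ J := Nat.cast_nonneg J
            nlinarith
          linarith
      _ = (J + 1) * Real.exp (-((J : ℝ) + 1)) := by simp
      _ < 1 := by
          have h3 := Real.add_one_lt_exp (x := (J : ℝ) + 1) (by positivity)
          rw [Real.exp_neg, ← div_eq_mul_inv, div_lt_one (Real.exp_pos _)]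
          linarith
  obtain ⟨x, hx1, hx2⟩ := aux_hit μ (cube d) hcube B hBm (fun q => 4 ^ (q.1 : ℕ) / c) n hsum
  refine ⟨x, hx1, ?_⟩
  intro h a hh h0 j hj
  by_contra hcon
  push Not at hcon
  have hne : Nonempty (boxL d M) := by
    rw [← Fintype.card_pos_iff, Fintype.card_coe, aux_box_card]
    positivity
  have hasum : ∑ k : boxL d M, ‖a k‖ ≤ 1 := by
    rw [Finset.sum_coe_sort (boxL d M) (fun k => ‖a k‖)]
    exact hh.sum1 _
  obtain ⟨p, hp0, hp1, hp2⟩ := aux_phase (fun k : boxL d M => a k) hasum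
  set r : ℝ := (1 / 2 : ℝ) ^ j / 16 with hr
  have h2j : (0 : ℝ) < (1 / 2 : ℝ) ^ j := by positivity
  have h2j1 : (1 / 2 : ℝ) ^ j ≤ 1 := pow_le_one₀ (by norm_num) (by norm_num)
  set ν : Measure (Fin d → ℝ) := ∑ i, Measure.dirac (x i) + ENNReal.ofReal c • μ with hν
  have hνu : ν Set.univ = ENNReal.ofReal (n + c) := by
    rw [hν, ENNReal.ofReal_add (Nat.cast_nonneg n) hcpos.le]
    simp
  have hexp : (m j : ℝ) * r ^ 2 / 64 = k := by
    have : (m j : ℝ) = 2 ^ 14 * k * 4 ^ j := by simp only [m]; push_cast; ring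
    rw [this, hr, div_pow, ← pow_mul, mul_comm j 2, pow_mul]
    have e : (4 : ℝ) ^ j * ((1 / 2 : ℝ) ^ 2) ^ j = 1 := by
      rw [← mul_pow]; norm_num
    calc _ = k * ((4 : ℝ) ^ j * ((1 / 2 : ℝ) ^ 2) ^ j) := by ring
      _ = k := by rw [e, mul_one]
  obtain ⟨τ, hτ⟩ := aux_maurey ν p U hp0 hp1 (fun i => (hUc i).measurable) hU1 (m j) r
    (by positivity) (by rw [hr]; linarith) (by
      rw [hexp, hνu, ← ENNReal.ofReal_mul (by positivity), ← ENNReal.ofReal_one]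
      exact (ENNReal.ofReal_lt_ofReal_iff one_pos).2 h1)
  set bad : Set (Fin d → ℝ) :=
    {x | m j * r ≤ ‖∑ i, U (τ i) x - m j * ∑ i, (p i : ℂ) * U i x‖} with hbad
  have hmean : ∀ y, ∑ i, (p i : ℂ) * U i y = (∑ k ∈ boxL d M, a k * eK d k y) / 2 := by
    intro y
    have := hp2 (fun k => eK d k y)
    rw [Finset.sum_coe_sort (boxL d M) (fun k => a k * eK d k y)] at this
    exact this
  have htr : ∀ y, ‖h y - ∑ k ∈ boxL d M, a k * eK d k y‖ ≤ (1 / 2 : ℝ) ^ j / 8 := by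
    intro y
    refine (aux_trunc hs hM hh ((1 / 2 : ℝ) ^ J / 8) (by positivity) hη y).trans ?_
    have : (1 / 2 : ℝ) ^ J ≤ (1 / 2 : ℝ) ^ j := pow_le_pow_of_le_one (by norm_num) (by norm_num) hj
    linarith
  have hclose : ∀ y, y ∉ bad → ‖∑ i, U (τ i) y - m j * (h y / 2)‖ <
      m j * ((1 / 2 : ℝ) ^ j / 8) := by
    intro y hy
    have hy' : ‖∑ i, U (τ i) y - m j * ∑ i, (p i : ℂ) * U i y‖ < m j * r := not_le.1 hy
    rw [hmean y] at hy'
    have e : ∑ i, U (τ i) y - m j * (h y / 2) =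
        (∑ i, U (τ i) y - m j * ((∑ k ∈ boxL d M, a k * eK d k y) / 2)) -
        ((m j / 2 : ℝ) : ℂ) * (h y - ∑ k ∈ boxL d M, a k * eK d k y) := by
      push_cast; ring
    rw [e]
    refine lt_of_le_of_lt (norm_sub_le _ _) ?_
    rw [norm_mul, Complex.norm_real, Real.norm_of_nonneg (by linarith [hmpos j])]
    have := mul_le_mul_of_nonneg_left (htr y) (by linarith [hmpos j] : 0 ≤ (m j : ℝ) / 2)
    rw [hr] at hy'
    linarith
  have hsamp : ∀ i, x i ∉ bad := by
    intro i hi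
    have h3 : (1 : ENNReal) ≤ ν bad := by
      rw [hν, Measure.add_apply, Measure.finsetSum_apply]
      refine le_trans ?_ le_self_add
      refine le_trans (le_of_eq ?_) (Finset.single_le_sum (fun _ _ => zero_le) (Finset.mem_univ i))
      exact (Measure.dirac_apply_of_mem hi).symm
    exact absurd hτ (not_lt.2 h3)
  have hμbad : μ.real bad ≤ 4 ^ j / c := by
    have h3 : ENNReal.ofReal c * μ bad < 1 := by
      refine lt_of_le_of_lt ?_ hτ
      rw [hν, Measure.add_apply, Measure.smul_apply, smul_eq_mul]
      exact le_add_self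
    have h4 : c * μ.real bad < 1 := by
      have := ENNReal.toReal_strict_mono ENNReal.one_ne_top h3
      rwa [ENNReal.toReal_mul, ENNReal.toReal_ofReal hcpos.le, ENNReal.toReal_one] at this
    rw [le_div_iff₀ hcpos]
    have : (1 : ℝ) ≤ 4 ^ j := one_le_pow₀ (by norm_num)
    linarith
  let q : (Σ j : Fin (J + 1), (Fin (m j) → (boxL d M) × Fin 4)) := ⟨⟨j, by omega⟩, τ⟩
  have hsub : {x | (1 / 2 : ℝ) ^ j ≤ ‖h x‖} ⊆ B q ∪ bad := by
    intro y hy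
    by_cases hyb : y ∈ bad
    · exact Or.inr hyb
    · left
      have h3 := hclose y hyb
      have hy : (1 / 2 : ℝ) ^ j ≤ ‖h y‖ := hy
      change m j * ((1 / 2 : ℝ) ^ j / 4) ≤ ‖∑ i, U (τ i) y‖
      have h4 : ‖(m j : ℂ) * (h y / 2)‖ = m j * (‖h y‖ / 2) := by simp
      have h5 : ‖(m j : ℂ) * (h y / 2)‖ ≤ ‖∑ i, U (τ i) y‖ +
          ‖∑ i, U (τ i) y - m j * (h y / 2)‖ := by
        have := norm_sub_le (∑ i, U (τ i) y) (∑ i, U (τ i) y - m j * (h y / 2))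
        rwa [sub_sub_cancel] at this
      rw [h4] at h5
      have := mul_le_mul_of_nonneg_left hy (hmpos j).le
      have := mul_pos (hmpos j) h2j
      linarith
  have hBq : 4 ^ j / c ≤ μ.real (B q) := by
    have h3 := (measureReal_mono (μ := μ) hsub).trans (measureReal_union_le _ _)
    have e : (4 : ℝ) ^ j / (4 * (J + 1) * 4 ^ J) = 2 * (4 ^ j / c) := by
      rw [hc]; field_simp; norm_num
    rw [e] at hcon
    linarith
  obtain ⟨i, hi⟩ := hx2 q hBq
  have h3 := hclose (x i) (hsamp i)
  have hi : m j * ((1 / 2 : ℝ) ^ j / 4) ≤ ‖∑ i', U (τ i') (x i)‖ := hi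
  rw [h0 i] at h3
  simp only [zero_div, mul_zero, sub_zero] at h3
  have := mul_pos (hmpos j) h2j
  linarith

lemma aux_dyadic (y : ℝ) (hy0 : 0 ≤ y) (hy1 : y ≤ 1) (J : ℕ) :
    y ^ 2 ≤ (1 / 4 : ℝ) ^ J +
      ∑ j ∈ Finset.range (J + 1), (if (1 / 2 : ℝ) ^ j ≤ y then 4 * (1 / 4 : ℝ) ^ j else 0) := by
  induction J with
  | zero =>
    have : (0 : ℝ) ≤ ∑ j ∈ Finset.range (0 + 1),
      (if (1 / 2 : ℝ) ^ j ≤ y then 4 * (1 / 4 : ℝ) ^ j else 0) :=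
      Finset.sum_nonneg fun j _ => by split_ifs <;> positivity
    have h2 : y ^ 2 ≤ 1 := by nlinarith
    simp only [pow_zero]
    linarith
  | succ J ih =>
    by_cases h : (1 / 2 : ℝ) ^ (J + 1) ≤ y
    · rw [Finset.sum_range_succ, if_pos h]
      have e : 4 * (1 / 4 : ℝ) ^ (J + 1) = (1 / 4 : ℝ) ^ J := by rw [pow_succ]; ring
      rw [e]
      have : (0 : ℝ) < (1 / 4 : ℝ) ^ (J + 1) := by positivity
      linarith
    · have : (0 : ℝ) ≤ ∑ j ∈ Finset.range (J + 1 + 1),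
        (if (1 / 2 : ℝ) ^ j ≤ y then 4 * (1 / 4 : ℝ) ^ j else 0) :=
        Finset.sum_nonneg fun j _ => by split_ifs <;> positivity
      have h2 : y ^ 2 ≤ ((1 / 2 : ℝ) ^ (J + 1)) ^ 2 := pow_le_pow_left₀ hy0 (not_le.1 h).le 2
      have e : ((1 / 2 : ℝ) ^ (J + 1)) ^ 2 = (1 / 4 : ℝ) ^ (J + 1) := by
        rw [← pow_mul, mul_comm, pow_mul]; norm_num
      linarith

lemma aux_Lp {d : ℕ} (h : (Fin d → ℝ) → ℂ) (hc : Continuous h) (hb : ∀ x, ‖h x‖ ≤ 1) (J : ℕ)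
    (hl : ∀ j ≤ J, (volume.restrict (cube d)).real {x | (1 / 2 : ℝ) ^ j ≤ ‖h x‖} ≤
          4 ^ j / (4 * (J + 1) * 4 ^ J)) (p ε : ℝ) (hp : 2 ≤ p) (hε : 0 < ε)
    (hJ : 2 ^ p * (2 * (1 / 4 : ℝ) ^ J) ≤ ε ^ p) (F : (Fin d → ℝ) → ℂ)
    (hF : ∀ x, F x = 2 * h x) :
    eLpNorm F (ENNReal.ofReal p) (volume.restrict (cube d)) ≤ ENNReal.ofReal ε := by
  have hprob := aux_cube_prob d
  set μ := volume.restrict (cube d) with hμ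
  have hp0 : 0 < p := by linarith
  rw [eLpNorm_eq_lintegral_rpow_enorm_toReal (by simpa using hp0) ENNReal.ofReal_ne_top,
    ENNReal.toReal_ofReal hp0.le]
  set T : ℕ → Set (Fin d → ℝ) := fun j => {x | (1 / 2 : ℝ) ^ j ≤ ‖h x‖} with hT
  have hTm : ∀ j, MeasurableSet (T j) := fun j =>
    measurableSet_le measurable_const hc.norm.measurable
  set G : (Fin d → ℝ) → ℝ := fun x => 2 ^ p * ((1 / 4 : ℝ) ^ J +
      ∑ j ∈ Finset.range (J + 1), (T j).indicator (fun _ => 4 * (1 / 4 : ℝ) ^ j) x) with hG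
  have hint : ∀ j, Integrable ((T j).indicator (fun _ => 4 * (1 / 4 : ℝ) ^ j)) μ := fun j =>
    (integrable_const _).indicator (hTm j)
  have hGi : Integrable G μ :=
    ((integrable_const _).add (integrable_finsetSum _ fun j _ => hint j)).const_mul _
  have hpt : ∀ x, ‖F x‖ ^ p ≤ G x := by
    intro x
    rw [hF, norm_mul, Complex.norm_ofNat, Real.mul_rpow (by norm_num) (norm_nonneg _)]
    apply mul_le_mul_of_nonneg_left _ (by positivity)
    have h1 := aux_dyadic ‖h x‖ (norm_nonneg _) (hb x) J
    have h2 : ‖h x‖ ^ p ≤ ‖h x‖ ^ 2 := by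
      rw [← Real.rpow_natCast]
      rcases (norm_nonneg (h x)).eq_or_lt with h0 | h0
      · rw [← h0, Real.zero_rpow hp0.ne']; positivity
      · exact Real.rpow_le_rpow_of_exponent_ge h0 (hb x) (by exact_mod_cast hp)
    refine h2.trans (h1.trans (le_of_eq ?_))
    congr 1
  have hGint : ∫ x, G x ∂μ ≤ ε ^ p := by
    refine le_trans ?_ hJ
    rw [hG, integral_const_mul]
    apply mul_le_mul_of_nonneg_left _ (by positivity)
    rw [integral_add (integrable_const _) (integrable_finsetSum _ fun j _ => hint j),
      integral_finsetSum _ (fun j _ => hint j)]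
    have e1 : ∀ j ∈ Finset.range (J + 1),
        ∫ x, (T j).indicator (fun _ => 4 * (1 / 4 : ℝ) ^ j) x ∂μ ≤ (1 / 4 : ℝ) ^ J / (J + 1) := by
      intro j hj
      rw [integral_indicator_const _ (hTm j), smul_eq_mul]
      have h3 := hl j (by simpa [Nat.lt_succ_iff] using hj)
      refine (mul_le_mul_of_nonneg_right h3 (by positivity)).trans (le_of_eq ?_)
      have e : (4 : ℝ) ^ j * (1 / 4 : ℝ) ^ j = 1 := by rw [← mul_pow]; norm_num
      have e' : (1 / 4 : ℝ) ^ J = 1 / 4 ^ J := by rw [div_pow, one_pow]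
      rw [e']
      field_simp
      linarith
    have e2 := Finset.sum_le_sum e1
    have e3 : ∑ j ∈ Finset.range (J + 1), (1 / 4 : ℝ) ^ J / (J + 1) = (1 / 4 : ℝ) ^ J := by
      rw [Finset.sum_const, Finset.card_range, nsmul_eq_mul]
      push_cast
      field_simp
    rw [e3] at e2
    simp only [integral_const, probReal_univ, smul_eq_mul, one_mul]
    linarith
  have hlin : ∫⁻ x, ‖F x‖ₑ ^ p ∂μ ≤ ENNReal.ofReal ε ^ p := by
    calc ∫⁻ x, ‖F x‖ₑ ^ p ∂μ ≤ ∫⁻ x, ENNReal.ofReal (G x) ∂μ := by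
          apply lintegral_mono
          intro x
          change ‖F x‖ₑ ^ p ≤ ENNReal.ofReal (G x)
          rw [← ofReal_norm, ENNReal.ofReal_rpow_of_nonneg (norm_nonneg _) hp0.le]
          exact ENNReal.ofReal_le_ofReal (hpt x)
      _ = ENNReal.ofReal (∫ x, G x ∂μ) := by
          rw [ofReal_integral_eq_lintegral_ofReal hGi]
          filter_upwards with x
          exact le_trans (by positivity) (hpt x)
      _ ≤ ENNReal.ofReal (ε ^ p) := ENNReal.ofReal_le_ofReal hGint
      _ = _ := (ENNReal.ofReal_rpow_of_nonneg hε.le hp0.le).symm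
  calc _ ≤ (ENNReal.ofReal ε ^ p) ^ (1 / p) := ENNReal.rpow_le_rpow hlin (by positivity)
    _ = ENNReal.ofReal ε := by
      rw [← ENNReal.rpow_mul, mul_one_div_cancel hp0.ne', ENNReal.rpow_one]

end Core

theorem aux_num1 (s : ℝ) (hs : 1/2 < s) : ∃ c0 : ℕ, 1 ≤ c0 ∧ ∀ d J : ℕ, 1 ≤ J →
    ((((2 ^ (c0 * (d + J)) : ℕ) : ℝ)) ^ (s - 1/2))⁻¹ *
      (∑' k : ℤ, (max 1 (|(k:ℝ)| ^ (1 + (s - 1/2))))⁻¹) ^ d ≤ ((1/2:ℝ)^J/8)^2 := by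
  set Z := ∑' k : ℤ, (max 1 (|(k:ℝ)| ^ (1 + (s - 1/2))))⁻¹ with hZ
  have hZ0 : 0 ≤ Z := tsum_nonneg fun k => by positivity
  have hg : 0 < s - 1/2 := by linarith
  have h2 : (1:ℝ) < 2 ^ (s - 1/2) := Real.one_lt_rpow (by norm_num) hg
  obtain ⟨c0, hc0⟩ := pow_unbounded_of_one_lt (max Z 256) h2
  have hQZ : Z ≤ ((2:ℝ) ^ (s - 1/2)) ^ c0 := (le_max_left _ _).trans hc0.le
  have hQ2 : 256 ≤ ((2:ℝ) ^ (s - 1/2)) ^ c0 := (le_max_right _ _).trans hc0.le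
  refine ⟨c0, ?_, ?_⟩
  · rcases Nat.eq_zero_or_pos c0 with h | h
    · subst h; norm_num at hQ2
    · exact h
  · intro d J hJ
    have e : ((((2 ^ (c0 * (d + J)) : ℕ) : ℝ)) ^ (s - 1/2)) =
        (((2:ℝ) ^ (s - 1/2)) ^ c0) ^ (d + J) := by
      push_cast
      rw [← pow_mul, ← Real.rpow_natCast, ← Real.rpow_natCast, ← Real.rpow_mul (by norm_num),
        ← Real.rpow_mul (by norm_num), mul_comm]
    rw [e]
    set Q := ((2:ℝ) ^ (s - 1/2)) ^ c0
    have hQ : 0 < Q := by linarith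
    rw [inv_mul_le_iff₀ (by positivity), pow_add]
    have a1 : Z ^ d ≤ Q ^ d := pow_le_pow_left₀ hZ0 hQZ d
    have a2 : (256:ℝ) ^ J ≤ Q ^ J := pow_le_pow_left₀ (by norm_num) hQ2 J
    have a3 : (64:ℝ) ≤ 64 ^ J := by
      calc (64:ℝ) = 64 ^ 1 := by norm_num
        _ ≤ 64 ^ J := pow_le_pow_right₀ (by norm_num) hJ
    have a4 : (256:ℝ) ^ J * ((1/2:ℝ)^J/8)^2 = 64 ^ J / 64 := by
      have : (256:ℝ) ^ J * ((1/2:ℝ)^J)^2 = 64 ^ J := by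
        rw [← pow_mul, mul_comm J 2, pow_mul, ← mul_pow]; norm_num
      rw [div_pow, ← mul_div_assoc, this]; norm_num
    calc Z ^ d ≤ Q ^ d * 1 := by rw [mul_one]; exact a1
      _ ≤ Q ^ d * (Q ^ J * ((1/2:ℝ)^J/8)^2) := by
        refine mul_le_mul_of_nonneg_left ?_ (by positivity)
        have := mul_le_mul_of_nonneg_right a2 (by positivity : 0 ≤ ((1/2:ℝ)^J/8)^2)
        rw [a4] at this
        linarith
      _ = _ := by ring

theorem aux_num2 (c0 d J : ℕ) (hd : 1 ≤ d) (hJ : 1 ≤ J) :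
    Real.log (4 * (2 * ((2 ^ (c0 * (d + J)) : ℕ) : ℝ) + 1) ^ d) ≤
      ((2 * c0 + 4 : ℕ) : ℝ) * d ^ 2 * J := by
  have h1 : (4 * (2 * ((2 ^ (c0 * (d + J)) : ℕ) : ℝ) + 1) ^ d) ≤
      2 ^ (2 + d * (c0 * (d + J) + 2)) := by
    push_cast
    have : 2 * (2:ℝ) ^ (c0 * (d + J)) + 1 ≤ 2 ^ (c0 * (d + J) + 2) := by
      have : (1:ℝ) ≤ 2 ^ (c0 * (d + J)) := one_le_pow₀ (by norm_num)
      rw [pow_add]; linarith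
    have := pow_le_pow_left₀ (by positivity) this d
    rw [← pow_mul] at this
    rw [pow_add 2 2, mul_comm d]
    linarith
  have h2 := Real.log_le_log (by positivity) h1
  rw [Real.log_pow] at h2
  have h3 : Real.log 2 ≤ 1 := by linarith [Real.log_two_lt_d9]
  refine h2.trans ?_
  refine (mul_le_of_le_one_right (by positivity) h3).trans ?_
  have hd1 : 1 ≤ d ^ 2 := Nat.one_le_pow _ _ hd
  have : 2 + d * (c0 * (d + J) + 2) ≤ (2 * c0 + 4) * d ^ 2 * J := by
    obtain ⟨a, rfl⟩ := Nat.exists_eq_add_of_le hd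
    obtain ⟨b, rfl⟩ := Nat.exists_eq_add_of_le hJ
    ring_nf
    nlinarith [Nat.zero_le (c0*a*b), Nat.zero_le (c0*a^2*b), Nat.zero_le (a*b),
      Nat.zero_le (a^2*b), Nat.zero_le (c0*b), Nat.zero_le (c0*a), Nat.zero_le (c0*a^2),
      Nat.zero_le (a^2)]
  exact_mod_cast this

theorem aux_num3 (c A d J l : ℕ) (hA : A = 2 * (c + 30) + 5) (hJ : 1 ≤ J)
    (hdl : d ≤ 2 ^ l) (n : ℕ)
    (hn : n = 8 * (J + 1) * 4 ^ J * (2 ^ 14 * (A * (J + l)) * (c * d ^ 2 * J) + (J + 1))) :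
    4 * Real.exp (-((A * (J + l) : ℕ) : ℝ)) * (n + 8 * (J + 1) * 4 ^ J) < 1 := by
  have hE : 2 ^ 30 * (c + 1) ≤ 2 ^ (c + 30) := by
    rw [pow_add, mul_comm]
    exact Nat.mul_le_mul_right _ Nat.lt_two_pow_self
  have hEE : c + 30 < 2 ^ (c + 30) := Nat.lt_two_pow_self
  have hA1 : A ≤ 7 * 2 ^ (c + 30) := by omega
  have hApos : 1 ≤ A := by omega
  have key : 2 ^ 19 * A * (c + 1) < 2 ^ (2 * (c + 30)) := by
    rw [two_mul (c + 30), pow_add]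
    generalize 2 ^ (c + 30) = T at *
    have : 2 ^ 19 * A * (c + 1) ≤ 2 ^ 19 * (7 * T) * (c + 1) := by gcongr
    have h3 : T * (2 ^ 30 * (c + 1)) ≤ T * T := Nat.mul_le_mul_left _ hE
    have hT : 1 ≤ T * (c + 1) := Nat.mul_pos (by omega) (by omega)
    nlinarith
  have b1 : J + 1 ≤ 2 ^ J := Nat.lt_two_pow_self
  have b2 : J + l ≤ 2 ^ (J + l) := Nat.lt_two_pow_self.le
  have b0 : J ≤ 2 ^ J := by omega
  have hd2 : d ^ 2 ≤ (2 ^ l) ^ 2 := Nat.pow_le_pow_left hdl 2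
  have hl1 : 1 ≤ 2 ^ l := Nat.one_le_two_pow
  have hJ1 : 1 ≤ 2 ^ J := Nat.one_le_two_pow
  have hb : n + 8 * (J + 1) * 4 ^ J ≤ 2 ^ 17 * A * (c + 1) * 32 ^ (J + l) := by
    have e4 : 4 ^ J = (2 ^ J) ^ 2 := by rw [← pow_mul, mul_comm, pow_mul]; norm_num
    have e32 : 32 ^ (J + l) = (2 ^ J) ^ 5 * (2 ^ l) ^ 5 := by
      rw [pow_add, ← pow_mul, ← pow_mul, mul_comm J, mul_comm l, pow_mul, pow_mul]; norm_num
    rw [e32, hn, e4]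
    rw [pow_add] at b2
    have e : 8 * (J + 1) * (2 ^ J) ^ 2 * (2 ^ 14 * (A * (J + l)) * (c * d ^ 2 * J) + (J + 1)) +
       8 * (J + 1) * (2 ^ J) ^ 2 = 8 * (J + 1) * (2 ^ J) ^ 2 * (2 ^ 14 * (A * (J + l)) * (c * d ^ 2 * J) + (J + 1) + 1) := by ring
    rw [e]
    generalize 2 ^ J = T at *
    generalize 2 ^ l = S at *
    calc _ ≤ 8 * T * T ^ 2 * (2 ^ 14 * (A * (T * S)) * (c * S ^ 2 * T) + T + T) := by gcongr
      _ = 2 ^ 17 * A * c * (T ^ 5 * S ^ 3) + 16 * T ^ 4 * 1 := by ring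
      _ ≤ 2 ^ 17 * A * c * (T ^ 5 * S ^ 5) + 2 ^ 17 * A * (T ^ 5 * S ^ 5) := by
        have h5 : S ^ 3 ≤ S ^ 5 := Nat.pow_le_pow_right hl1 (by norm_num)
        have h6 : T ^ 4 ≤ T ^ 5 := Nat.pow_le_pow_right hJ1 (by norm_num)
        have h7 : 1 ≤ S ^ 5 := Nat.one_le_pow _ _ hl1
        have h8 : 16 ≤ 2 ^ 17 * A := by omega
        have h9 : 16 * T ^ 4 * 1 ≤ (2 ^ 17 * A) * T ^ 5 * S ^ 5 := by gcongr
        have h10 : 2 ^ 17 * A * c * (T ^ 5 * S ^ 3) ≤ 2 ^ 17 * A * c * (T ^ 5 * S ^ 5) := by gcongr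
        nlinarith
      _ = _ := by ring
  have hfin : 4 * (n + 8 * (J + 1) * 4 ^ J) < 2 ^ (A * (J + l)) := by
    have e : A * (J + l) = 5 * (J + l) + (2 * (c + 30)) * (J + l) := by rw [hA]; ring
    rw [e, pow_add, pow_mul 2 5]
    have : 2 ^ (2 * (c + 30)) ≤ 2 ^ (2 * (c + 30) * (J + l)) :=
      Nat.pow_le_pow_right (by norm_num) (Nat.le_mul_of_pos_right _ (by omega))
    have h32 : 0 < 32 ^ (J + l) := by positivity
    calc _ ≤ 4 * (2 ^ 17 * A * (c + 1) * 32 ^ (J + l)) := by gcongr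
      _ = 32 ^ (J + l) * (2 ^ 19 * A * (c + 1)) := by ring
      _ < 32 ^ (J + l) * 2 ^ (2 * (c + 30) * (J + l)) := by
        exact Nat.mul_lt_mul_of_pos_left (key.trans_le this) h32
      _ = _ := by norm_num
  have hexp : (2:ℝ) ^ (A * (J + l)) ≤ Real.exp ((A * (J + l) : ℕ) : ℝ) := by
    rw [← mul_one ((A * (J + l) : ℕ) : ℝ), Real.exp_nat_mul]
    exact pow_le_pow_left₀ (by norm_num) (by linarith [Real.exp_one_gt_d9]) _
  have hfin' : 4 * ((n:ℝ) + 8 * (J + 1) * 4 ^ J) < (2:ℝ) ^ (A * (J + l)) := by exact_mod_cast hfin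
  rw [Real.exp_neg, mul_comm (4:ℝ), mul_assoc, inv_mul_lt_iff₀ (Real.exp_pos _), mul_one]
  exact hfin'.trans_le hexp

theorem aux_num4 (c A d J l : ℕ) (hd : 1 ≤ d) (hJ : 1 ≤ J) (hl : 1 ≤ l) :
    8 * (J + 1) * 4 ^ J * (2 ^ 14 * (A * (J + l)) * (c * d ^ 2 * J) + (J + 1)) ≤
    16 * (2 ^ 15 * A * c + 2) * J ^ 3 * 4 ^ J * d ^ 2 * l := by
  have h1 : J + 1 ≤ 2 * J := by omega
  have h2 : J + l ≤ 2 * (J * l) := by nlinarith [Nat.mul_le_mul hJ hl]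
  have h3 : 1 ≤ J * l * d ^ 2 := Nat.mul_pos (Nat.mul_pos hJ hl) (Nat.pow_pos hd)
  calc _ ≤ 8 * (2 * J) * 4 ^ J * (2 ^ 14 * (A * (2 * (J * l))) * (c * d ^ 2 * J) + 2 * J * (J * l * d ^ 2)) := by
        gcongr
        nlinarith
    _ = _ := by ring

theorem aux_num5 (p ε : ℝ) (hp : 2 ≤ p) (hε : 0 < ε) (hε2 : ε < 1/2) :
    ∃ J : ℕ, 1 ≤ J ∧ 2 ^ p * (2 * (1/4:ℝ) ^ J) ≤ ε ^ p ∧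
      (4:ℝ) ^ J ≤ 8 * 2 ^ p * ε ^ (-p) ∧ (J : ℝ) ≤ (3 + 2 * p) * Real.log ε⁻¹ := by
  have hεp : 0 < ε ^ p := Real.rpow_pos_of_pos hε p
  have hi : ε ^ (-p) = (ε ^ p)⁻¹ := Real.rpow_neg hε.le p
  have h2p : (1:ℝ) ≤ 2 ^ p := Real.one_le_rpow (by norm_num) (by linarith)
  have hle1 : ε ^ p ≤ 1 := Real.rpow_le_one hε.le (by linarith) (by linarith)
  have hinv : 1 ≤ (ε ^ p)⁻¹ := (one_le_inv₀ hεp).2 hle1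
  have hX : (1:ℝ) ≤ 2 * 2 ^ p * (ε ^ p)⁻¹ := by nlinarith
  obtain ⟨m, hm1, hm2⟩ := exists_nat_pow_near hX (by norm_num : (1:ℝ) < 4)
  have hlog2 : Real.log 2 ≤ Real.log ε⁻¹ := by
    apply Real.log_le_log (by norm_num)
    rw [le_inv_comm₀ (by norm_num) hε]; linarith
  have hl2 := Real.log_two_gt_d9
  refine ⟨m + 1, by omega, ?_, ?_, ?_⟩
  · rw [one_div, inv_pow]
    have h4 : (0:ℝ) < 4 ^ (m + 1) := by positivity
    have := hm2.le
    rw [← div_eq_mul_inv, div_le_iff₀ hεp] at this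
    rw [← mul_assoc, ← div_eq_mul_inv, div_le_iff₀ h4]
    linarith
  · rw [hi, pow_succ]; linarith
  · have := Real.log_le_log (by positivity) hm1
    rw [Real.log_pow, Real.log_mul (by positivity) (by positivity), Real.log_mul (by norm_num) (by positivity), Real.log_inv,
      Real.log_rpow (by norm_num), Real.log_rpow hε] at this
    rw [Real.log_inv] at hlog2 ⊢
    have h4 : Real.log 4 = 2 * Real.log 2 := by
      rw [show (4:ℝ) = 2 ^ 2 by norm_num, Real.log_pow]; norm_num
    rw [h4] at this
    have hm0 : (0:ℝ) ≤ m := by positivity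
    push_cast
    nlinarith

theorem aux_num6 (d : ℕ) (hd : 1 ≤ d) : ∃ l : ℕ, 1 ≤ l ∧ d ≤ 2 ^ l ∧
    (l : ℝ) ≤ 4 * Real.log ((d:ℝ) + 1) := by
  refine ⟨Nat.log 2 d + 1, by omega, (Nat.lt_pow_succ_log_self (by norm_num) d).le, ?_⟩
  have h : (2:ℝ) ^ (Nat.log 2 d) ≤ d + 1 := by
    have := Nat.pow_log_le_self 2 (show d ≠ 0 by omega)
    have : (2:ℝ) ^ (Nat.log 2 d) ≤ d := by exact_mod_cast this
    linarith
  have h1 := Real.log_le_log (by positivity) h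
  rw [Real.log_pow] at h1
  have h2 : Real.log 2 ≤ Real.log ((d:ℝ) + 1) := by
    apply Real.log_le_log (by norm_num)
    have : (1:ℝ) ≤ d := by exact_mod_cast hd
    linarith
  have hl2 := Real.log_two_gt_d9
  have : (0:ℝ) ≤ (Nat.log 2 d : ℕ) := by positivity
  push_cast
  nlinarith

theorem aux_main (s : ℝ) (hs : 1/2 < s) (p : ℝ) (hp : 2 ≤ p) : ∃ C : ℝ, 0 < C ∧
    ∀ (d : ℕ) (ε : ℝ), 1 ≤ d → 0 < ε → ε < 1/2 →
      ∃ n : ℕ, (n : ℝ) ≤ C * d ^ 2 * Real.log ((d:ℝ) + 1) * ε ^ (-p) * Real.log ε⁻¹ ^ 4 ∧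
        ∃ (x : Fin n → (Fin d → ℝ)) (φ : (Fin n → ℂ) → ((Fin d → ℝ) → ℂ)),
          (∀ i, x i ∈ cube d) ∧
          ∀ f ∈ Fmix s d, ∀ q : ℝ, q ≤ p →
            eLpNorm (fun t => f t - φ (fun i => f (x i)) t) (ENNReal.ofReal q)
              (volume.restrict (cube d)) ≤ ENNReal.ofReal ε := by
  obtain ⟨c0, hc0, hη⟩ := aux_num1 s hs
  set c : ℕ := 2 * c0 + 4 with hc
  set A : ℕ := 2 * (c + 30) + 5 with hA
  set K : ℝ := 16 * (2 ^ 15 * A * c + 2) with hK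
  have hKpos : 0 < K := by positivity
  have h2p : (0:ℝ) < 2 ^ p := Real.rpow_pos_of_pos (by norm_num) p
  have hp3 : 0 < 3 + 2 * p := by linarith
  refine ⟨K * (2 * (3 + 2 * p) ^ 3) * (8 * 2 ^ p) * 4, by positivity, ?_⟩
  intro d ε hd hε hε2
  obtain ⟨J, hJ, hJ1, hJ2, hJ3⟩ := aux_num5 p ε hp hε hε2
  obtain ⟨l, hl, hdl, hl3⟩ := aux_num6 d hd
  obtain ⟨n, hn⟩ : ∃ n : ℕ, n = 8 * (J + 1) * 4 ^ J *
      (2 ^ 14 * (A * (J + l)) * (c * d ^ 2 * J) + (J + 1)) := ⟨_, rfl⟩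
  have hcount := aux_num4 c A d J l hd hJ hl
  rw [← hn] at hcount
  have hL : Real.log 2 ≤ Real.log ε⁻¹ := by
    apply Real.log_le_log (by norm_num)
    rw [le_inv_comm₀ (by norm_num) hε]; linarith
  have hl2 := Real.log_two_gt_d9
  refine ⟨n, ?_, ?_⟩
  · have hcount' : (n:ℝ) ≤ K * (J:ℝ) ^ 3 * 4 ^ J * d ^ 2 * l := by
      rw [hK]; exact_mod_cast hcount
    set L := Real.log ε⁻¹ with hLdef
    have hL0 : 0 < L := by linarith
    have hJ4 : (J:ℝ) ^ 3 ≤ 2 * (3 + 2 * p) ^ 3 * L ^ 4 := by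
      calc (J:ℝ) ^ 3 ≤ ((3 + 2 * p) * L) ^ 3 := pow_le_pow_left₀ (by positivity) hJ3 3
        _ = (3 + 2 * p) ^ 3 * L ^ 3 * 1 := by ring
        _ ≤ (3 + 2 * p) ^ 3 * L ^ 3 * (2 * L) := by
          refine mul_le_mul_of_nonneg_left ?_ (by positivity)
          linarith
        _ = _ := by ring
    have hε0 : 0 < ε ^ (-p) := Real.rpow_pos_of_pos hε _
    calc (n:ℝ) ≤ K * (J:ℝ) ^ 3 * 4 ^ J * d ^ 2 * l := hcount'
      _ ≤ K * (2 * (3 + 2 * p) ^ 3 * L ^ 4) * (8 * 2 ^ p * ε ^ (-p)) * d ^ 2 *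
          (4 * Real.log ((d:ℝ) + 1)) := by gcongr
      _ = _ := by ring
  · have hlog := aux_num2 c0 d J hd hJ
    have h1 := aux_num3 c A d J l hA hJ hdl n hn
    have h2 : 8 * ((J:ℝ) + 1) * 4 ^ J * (2 ^ 14 * ((A * (J + l) : ℕ) : ℝ) *
        Real.log (4 * (2 * ((2 ^ (c0 * (d + J)) : ℕ) : ℝ) + 1) ^ d) + (J + 1)) ≤ n := by
      have e : (n:ℝ) = 8 * ((J:ℝ) + 1) * 4 ^ J * (2 ^ 14 * ((A * (J + l) : ℕ) : ℝ) *
        ((c : ℝ) * d ^ 2 * J) + (J + 1)) := by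
        rw [hn]; push_cast; ring
      rw [e]
      gcongr
    obtain ⟨x, hx, hlev⟩ := aux_core s hs d (2 ^ (c0 * (d + J))) J (A * (J + l)) n
      Nat.one_le_two_pow (hη d J hJ) h1 h2
    classical
    refine ⟨x, fun y => if h : ∃ g ∈ Fmix s d, (fun i => g (x i)) = y then h.choose else 0, hx, ?_⟩
    intro f hf q hq
    have hex : ∃ g ∈ Fmix s d, (fun i => g (x i)) = (fun i => f (x i)) := ⟨f, hf, rfl⟩
    beta_reduce
    rw [dif_pos hex]
    obtain ⟨hg, hgx⟩ := hex.choose_spec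
    generalize hex.choose = g at hg hgx
    have hco := aux_coef_sub (aux_coef hf) (aux_coef hg)
    have hcont := hco.cont
    have hprob := aux_cube_prob d
    have hmain := aux_Lp (fun x => (f x - g x) / 2) hcont (fun x => aux_coef_le hco x) J
      (hlev _ _ hco (fun i => by
        have := congrFun hgx i
        simp [this])) p ε hp hε hJ1 (fun t => f t - g t) (fun x => by ring)
    refine le_trans (eLpNorm_le_eLpNorm_of_exponent_le (ENNReal.ofReal_le_ofReal hq) ?_) hmain
    have hc2 : Continuous (fun t => f t - g t) := hf.1.1.sub hg.1.1
    exact hc2.aestronglyMeasurable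
/-- Corollary `cor:Sob`: for `s > 1/2` and `1 ≤ p < ∞`, `L_p`-approximation
on `F^{s,d}_mix` is polynomially tractable; more precisely, for `p ≥ 2` there is `C > 0`
(depending only on `s` and `p`) with `n(ε, F^{s,d}_mix, L_p) ≤ C d² log(d) ε^{-p} log⁴(ε⁻¹)`
for all `d ≥ 2`, `ε ∈ (0,1/2)`. -/
theorem statement6 :
    ∀ (s p : ℝ), 1/2 < s → 1 ≤ p →
      ((∃ C q r : ℝ, 0 ≤ C ∧ 0 ≤ q ∧ 0 ≤ r ∧
        ∀ (d : ℕ) (ε : ℝ), 1 ≤ d → 0 < ε →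
          ∃ n : ℕ, (n : ℝ) ≤ C * (d : ℝ) ^ q * ε ^ (-r) ∧
            ∃ (x : Fin n → (Fin d → ℝ)) (φ : (Fin n → ℂ) → ((Fin d → ℝ) → ℂ)),
              (∀ i, x i ∈ cube d) ∧
              ∀ f ∈ Fmix s d,
                eLpNorm (fun t => f t - φ (fun i => f (x i)) t) (ENNReal.ofReal p)
                    (volume.restrict (cube d)) ≤ ENNReal.ofReal ε) ∧
      (2 ≤ p →
        ∃ C : ℝ, 0 < C ∧
          ∀ (d : ℕ) (ε : ℝ), 2 ≤ d → ε ∈ Set.Ioo (0 : ℝ) (1/2) →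
            ∃ n : ℕ,
              (n : ℝ) ≤ C * d ^ 2 * Real.log d * ε ^ (-p) * Real.log ε⁻¹ ^ 4 ∧
              ∃ (x : Fin n → (Fin d → ℝ)) (φ : (Fin n → ℂ) → ((Fin d → ℝ) → ℂ)),
                (∀ i, x i ∈ cube d) ∧
                ∀ f ∈ Fmix s d,
                  eLpNorm (fun t => f t - φ (fun i => f (x i)) t) (ENNReal.ofReal p)
                      (volume.restrict (cube d)) ≤ ENNReal.ofReal ε)) := by
  intro s p hs hp
  refine ⟨?_, ?_⟩
  · obtain ⟨C, hC, hmain⟩ := aux_main s hs (max p 2) (le_max_right _ _)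
    have hp' : 2 ≤ max p 2 := le_max_right _ _
    refine ⟨C * 4 ^ (max p 2 + 4), 3, max p 2 + 4, by positivity, by norm_num, by linarith, ?_⟩
    intro d ε hd hε
    rcases le_or_gt 1 ε with h1 | h1
    · refine ⟨0, ?_, fun i => i.elim0, fun _ => 0, fun i => i.elim0, ?_⟩
      · rw [Nat.cast_zero]; positivity
      · intro f hf
        have hprob := aux_cube_prob d
        have hb : ∀ t, ‖f t‖ ≤ 1 := fun t => aux_coef_le (aux_coef hf) t
        have := eLpNorm_le_of_ae_bound (p := ENNReal.ofReal p) (μ := volume.restrict (cube d))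
          (f := fun t => f t - (0 : (Fin d → ℝ) → ℂ) t) (C := 1)
          (Filter.Eventually.of_forall fun t => by simpa using hb t)
        refine this.trans ?_
        simp only [measure_univ, ENNReal.one_rpow, one_mul]
        exact ENNReal.ofReal_le_ofReal h1
    · obtain ⟨n, hn, x, φ, hx, hφ⟩ := hmain d (ε / 4) hd (by positivity) (by linarith)
      refine ⟨n, ?_, x, φ, hx, fun f hf => (hφ f hf p (le_max_left _ _)).trans
        (ENNReal.ofReal_le_ofReal (by linarith))⟩
      refine hn.trans ?_
      have hlogd : Real.log ((d:ℝ) + 1) ≤ d := by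
        have := Real.log_le_sub_one_of_pos (show (0:ℝ) < d + 1 by positivity)
        linarith
      have hlog0 : 0 ≤ Real.log (ε / 4)⁻¹ :=
        Real.log_nonneg ((one_le_inv₀ (by positivity)).2 (by linarith))
      have hlogε : Real.log (ε / 4)⁻¹ ≤ (ε / 4)⁻¹ := Real.log_le_self (by positivity)
      have h4 : Real.log (ε / 4)⁻¹ ^ 4 ≤ (ε / 4)⁻¹ ^ 4 := pow_le_pow_left₀ hlog0 hlogε 4
      have e1 : (ε / 4) ^ (-(max p 2)) * (ε / 4)⁻¹ ^ 4 = 4 ^ (max p 2 + 4) * ε ^ (-(max p 2 + 4)) := by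
        have e2 : (ε / 4)⁻¹ ^ 4 = (ε / 4) ^ (-(4:ℝ)) := by
          rw [Real.rpow_neg (by positivity), inv_pow]
          norm_cast
        rw [e2, ← Real.rpow_add (by positivity), Real.rpow_neg hε.le,
          show -(max p 2) + -4 = -(max p 2 + 4) by ring, Real.rpow_neg (by positivity),
          Real.div_rpow hε.le (by norm_num), inv_div, div_eq_mul_inv]
      have e3 : (d:ℝ) ^ (3:ℝ) = (d:ℝ) ^ 3 := by norm_cast
      calc C * d ^ 2 * Real.log ((d:ℝ) + 1) * (ε / 4) ^ (-(max p 2)) * Real.log (ε / 4)⁻¹ ^ 4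
          ≤ C * d ^ 2 * d * (ε / 4) ^ (-(max p 2)) * (ε / 4)⁻¹ ^ 4 := by gcongr
        _ = C * d ^ 3 * ((ε / 4) ^ (-(max p 2)) * (ε / 4)⁻¹ ^ 4) := by ring
        _ = _ := by rw [e1, e3]; ring
  · intro hp2
    obtain ⟨C, hC, hmain⟩ := aux_main s hs p hp2
    refine ⟨C * 2, by positivity, ?_⟩
    intro d ε hd hε
    obtain ⟨hε0, hε1⟩ := hε
    obtain ⟨n, hn, x, φ, hx, hφ⟩ := hmain d ε (by omega) hε0 hε1
    refine ⟨n, hn.trans ?_, x, φ, hx, fun f hf => hφ f hf p le_rfl⟩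
    have hd2 : (2:ℝ) ≤ d := by exact_mod_cast hd
    have hlog : Real.log ((d:ℝ) + 1) ≤ 2 * Real.log d := by
      have : 2 * Real.log (d:ℝ) = Real.log ((d:ℝ) ^ 2) := by rw [Real.log_pow]; norm_num
      rw [this]
      apply Real.log_le_log (by positivity)
      nlinarith
    have hε2 : 0 < ε ^ (-p) := Real.rpow_pos_of_pos hε0 _
    calc C * d ^ 2 * Real.log ((d:ℝ) + 1) * ε ^ (-p) * Real.log ε⁻¹ ^ 4
        ≤ C * d ^ 2 * (2 * Real.log d) * ε ^ (-p) * Real.log ε⁻¹ ^ 4 := by gcongr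
      _ = _ := by ring
end
end

section
/- Let d ≥ 2, s > 1/2, K > 0, and let γ = (γ_i) be product weights with 1 ≥ γ₁ ≥ γ₂ ≥ … > 0 satisfying ∑_{i=1}^d γ_i ≤ K log(d). Then there exist constants C, q > 0, depending only on K and s, such that H^{s,d,γ} ⊂ C d^q · F^{s,d}_mix; that is, every f in the weighted Korobov unit ball H^{s,d,γ} satisfies ∑_{k∈ℤ^d} |f̂(k)| ≤ C d^q and ∑_{k∈ℤ^d} |f̂(k)|² ∏_{i=1}^d max(1, |k_i|^{2s}) ≤ (C d^q)². -/
open MeasureTheory Real Finset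

noncomputable section

/-- The weighted Korobov weight `∏_{i=1}^d max(1, γ_i⁻¹ |k_i|^{2s})`. -/
def wKor (s : ℝ) (d : ℕ) (γ : Fin d → ℝ) (k : Fin d → ℤ) : ℝ :=
  ∏ i, max 1 ((γ i)⁻¹ * |(k i : ℝ)| ^ (2 * s))

/-- The weighted Korobov unit ball `H^{s,d,γ}`. -/
def HKor (s : ℝ) (d : ℕ) (γ : Fin d → ℝ) : Set ((Fin d → ℝ) → ℂ) :=
  {f | Continuous f ∧ Periodic1 d f ∧
    Summable (fun k : Fin d → ℤ => ‖fCoeff d f k‖ ^ 2 * wKor s d γ k) ∧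
    ∑' k : Fin d → ℤ, ‖fCoeff d f k‖ ^ 2 * wKor s d γ k ≤ 1}

theorem one_dim_bound (s : ℝ) (hs : 1/2 < s) (g : ℝ) (hg : 0 < g) (T : Finset ℤ) :
    ∑ n ∈ T, (max 1 (g⁻¹ * |(n : ℝ)| ^ (2 * s)))⁻¹ ≤
      Real.exp (g * ∑' n : ℤ, |(n : ℝ)| ^ (-(2 * s))) := by
  have hsum : Summable fun n : ℤ => |(n : ℝ)| ^ (-(2 * s)) :=
    Real.summable_abs_int_rpow (by linarith)
  have h1 : ∀ n : ℤ, (max 1 (g⁻¹ * |(n : ℝ)| ^ (2 * s)))⁻¹ ≤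
      (if n = 0 then 1 else 0) + g * |(n : ℝ)| ^ (-(2 * s)) := by
    intro n
    by_cases hn : n = 0
    · have : 0 ≤ g * |(n : ℝ)| ^ (-(2 * s)) := by positivity
      have h2 : (max 1 (g⁻¹ * |(n : ℝ)| ^ (2 * s)))⁻¹ ≤ 1 :=
        inv_le_one_of_one_le₀ (le_max_left _ _)
      rw [if_pos hn]
      linarith
    · rw [if_neg hn, zero_add]
      have hp : 0 < |(n : ℝ)| := by
        have : (n : ℝ) ≠ 0 := by exact_mod_cast hn
        positivity
      have hq : 0 < g⁻¹ * |(n : ℝ)| ^ (2 * s) := by positivity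
      calc (max 1 (g⁻¹ * |(n : ℝ)| ^ (2 * s)))⁻¹ ≤ (g⁻¹ * |(n : ℝ)| ^ (2 * s))⁻¹ :=
            inv_anti₀ hq (le_max_right _ _)
        _ = g * |(n : ℝ)| ^ (-(2 * s)) := by
            rw [Real.rpow_neg hp.le, mul_inv, inv_inv]
  have h3 : ∑ n ∈ T, (if n = 0 then (1 : ℝ) else 0) ≤ 1 := by
    rw [Finset.sum_ite_eq']
    split_ifs <;> norm_num
  have h4 : ∑ n ∈ T, |(n : ℝ)| ^ (-(2 * s)) ≤ ∑' n : ℤ, |(n : ℝ)| ^ (-(2 * s)) :=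
    hsum.sum_le_tsum T (fun n _ => by positivity)
  calc _ ≤ ∑ n ∈ T, ((if n = 0 then 1 else 0) + g * |(n : ℝ)| ^ (-(2 * s))) :=
        Finset.sum_le_sum fun n _ => h1 n
    _ = ∑ n ∈ T, (if n = 0 then (1 : ℝ) else 0) + g * ∑ n ∈ T, |(n : ℝ)| ^ (-(2 * s)) := by
        rw [Finset.sum_add_distrib, Finset.mul_sum]
    _ ≤ 1 + g * ∑' n : ℤ, |(n : ℝ)| ^ (-(2 * s)) :=
        add_le_add h3 (mul_le_mul_of_nonneg_left h4 hg.le)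
    _ ≤ _ := by
        rw [add_comm]
        exact Real.add_one_le_exp _

theorem inv_wKor_bound (s : ℝ) (hs : 1/2 < s) (d : ℕ) (γ : Fin d → ℝ) (hg : ∀ i, 0 < γ i)
    (T : Finset (Fin d → ℤ)) :
    ∑ k ∈ T, (wKor s d γ k)⁻¹ ≤
      Real.exp ((∑ i, γ i) * ∑' n : ℤ, |(n : ℝ)| ^ (-(2 * s))) := by
  classical
  have hsub : T ⊆ Fintype.piFinset (fun i : Fin d => T.image (fun k => k i)) := by
    intro k hk
    rw [Fintype.mem_piFinset]
    intro i
    exact Finset.mem_image_of_mem _ hk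
  have hpos : ∀ k, 0 ≤ (wKor s d γ k)⁻¹ := fun k => by
    unfold wKor
    positivity
  calc _ ≤ ∑ k ∈ Fintype.piFinset (fun i : Fin d => T.image (fun k => k i)), (wKor s d γ k)⁻¹ :=
        Finset.sum_le_sum_of_subset_of_nonneg hsub fun k _ _ => hpos k
    _ = ∏ i, ∑ n ∈ (T.image (fun k => k i) : Finset ℤ), (max 1 ((γ i)⁻¹ * |((n : ℤ) : ℝ)| ^ (2 * s)))⁻¹ := by
        rw [Finset.prod_univ_sum]
        refine Finset.sum_congr rfl fun k _ => ?_
        simp only [wKor, Finset.prod_inv_distrib]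
    _ ≤ ∏ i, Real.exp (γ i * ∑' n : ℤ, |(n : ℝ)| ^ (-(2 * s))) :=
        Finset.prod_le_prod (fun i _ => Finset.sum_nonneg fun n _ => by positivity)
          fun i _ => one_dim_bound s hs (γ i) (hg i) _
    _ = _ := by rw [← Real.exp_sum, Finset.sum_mul]

/-- inclusion \eqref{eq:inclusion} of Remark `rem:weighted`: for `s > 1/2`
and `K > 0` there are `C, q > 0`, depending only on `K` and `s`, such that for all `d ≥ 2`
and all product weights `1 ≥ γ₁ ≥ γ₂ ≥ … > 0` with `∑_{i=1}^d γ_i ≤ K log d`, one has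
`H^{s,d,γ} ⊂ C d^q F^{s,d}_mix`; i.e. every `f ∈ H^{s,d,γ}` satisfies
`∑_k |f̂(k)| ≤ C d^q` and `∑_k |f̂(k)|² ∏_i max(1,|k_i|^{2s}) ≤ (C d^q)²`. -/
theorem statement12 :
    ∀ (s K : ℝ), 1/2 < s → 0 < K →
      ∃ C q : ℝ, 0 < C ∧ 0 < q ∧
        ∀ (d : ℕ), 2 ≤ d →
          ∀ γ : Fin d → ℝ,
            (∀ i, 0 < γ i) → (∀ i, γ i ≤ 1) →
            (∀ i j : Fin d, i ≤ j → γ j ≤ γ i) →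
            (∑ i, γ i) ≤ K * Real.log d →
            ∀ f ∈ HKor s d γ,
              Summable (fun k : Fin d → ℤ => ‖fCoeff d f k‖) ∧
              (∑' k : Fin d → ℤ, ‖fCoeff d f k‖) ≤ C * (d : ℝ) ^ q ∧
              Summable (fun k : Fin d → ℤ => ‖fCoeff d f k‖ ^ 2 * wMix s d k) ∧
              (∑' k : Fin d → ℤ, ‖fCoeff d f k‖ ^ 2 * wMix s d k) ≤ (C * (d : ℝ) ^ q) ^ 2 := by
  intro s K hs hK
  set Z : ℝ := ∑' n : ℤ, |(n : ℝ)| ^ (-(2 * s)) with hZ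
  have hZ0 : 0 ≤ Z := tsum_nonneg fun n => by positivity
  refine ⟨1, Z * K + 1, one_pos, by positivity, ?_⟩
  intro d hd γ hg hg1 _ hsumg f hf
  obtain ⟨-, -, hS, hle⟩ := hf
  rw [one_mul]
  have hd1 : (1 : ℝ) ≤ d := by exact_mod_cast (by omega : 1 ≤ d)
  have hd0 : (0 : ℝ) < d := by linarith
  have hD1 : 1 ≤ (d : ℝ) ^ (Z * K + 1) := Real.one_le_rpow hd1 (by positivity)
  have hwpos : ∀ k, 0 < wKor s d γ k := fun k =>
    Finset.prod_pos fun i _ => lt_of_lt_of_le one_pos (le_max_left _ _)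
  have hww : ∀ k, wMix s d k ≤ wKor s d γ k := fun k => by
    refine Finset.prod_le_prod (fun i _ => by positivity) fun i _ => max_le_max le_rfl ?_
    exact le_mul_of_one_le_left (by positivity) ((one_le_inv₀ (hg i)).2 (hg1 i))
  have hm0 : ∀ k, 0 ≤ ‖fCoeff d f k‖ ^ 2 * wMix s d k := fun k => by
    unfold wMix
    positivity
  have hmle : ∀ k, ‖fCoeff d f k‖ ^ 2 * wMix s d k ≤ ‖fCoeff d f k‖ ^ 2 * wKor s d γ k :=
    fun k => mul_le_mul_of_nonneg_left (hww k) (by positivity)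
  have hSm : Summable (fun k : Fin d → ℤ => ‖fCoeff d f k‖ ^ 2 * wMix s d k) :=
    Summable.of_nonneg_of_le hm0 hmle hS
  have hk0 : ∀ k, 0 ≤ ‖fCoeff d f k‖ ^ 2 * wKor s d γ k := fun k => (hm0 k).trans (hmle k)
  have hfin : ∀ T : Finset (Fin d → ℤ), ∑ k ∈ T, ‖fCoeff d f k‖ ≤ (d : ℝ) ^ (Z * K + 1) := by
    intro T
    have hcs : (∑ k ∈ T, ‖fCoeff d f k‖) ^ 2 ≤
        (∑ k ∈ T, ‖fCoeff d f k‖ ^ 2 * wKor s d γ k) * ∑ k ∈ T, (wKor s d γ k)⁻¹ := by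
      refine Finset.sum_sq_le_sum_mul_sum_of_sq_eq_mul T (fun k _ => hk0 k)
        (fun k _ => (inv_pos.2 (hwpos k)).le) fun k _ => ?_
      rw [mul_assoc, mul_inv_cancel₀ (hwpos k).ne', mul_one]
    have hA : ∑ k ∈ T, ‖fCoeff d f k‖ ^ 2 * wKor s d γ k ≤ 1 :=
      (hS.sum_le_tsum T fun k _ => hk0 k).trans hle
    have hB : ∑ k ∈ T, (wKor s d γ k)⁻¹ ≤ (d : ℝ) ^ (Z * K + 1) := by
      refine (inv_wKor_bound s hs d γ hg T).trans ?_
      rw [← hZ, Real.rpow_def_of_pos hd0]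
      apply Real.exp_le_exp.2
      have := mul_le_mul_of_nonneg_right hsumg hZ0
      have := Real.log_nonneg hd1
      nlinarith
    have hB0 : 0 ≤ ∑ k ∈ T, (wKor s d γ k)⁻¹ :=
      Finset.sum_nonneg fun k _ => (inv_pos.2 (hwpos k)).le
    refine abs_le_of_sq_le_sq' ?_ (by linarith) |>.2
    nlinarith
  have hSf : Summable (fun k : Fin d → ℤ => ‖fCoeff d f k‖) :=
    summable_of_sum_le (fun k => norm_nonneg _) hfin
  refine ⟨hSf, hSf.tsum_le_of_sum_le hfin, hSm, ?_⟩
  calc _ ≤ ∑' k : Fin d → ℤ, ‖fCoeff d f k‖ ^ 2 * wKor s d γ k := hSm.tsum_le_tsum hmle hS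
    _ ≤ 1 := hle
    _ ≤ _ := one_le_pow₀ hD1
end
end

section
/- For any m, n ∈ ℕ with m > n and any linear map T_n : ℂ^m → ℂ^m of rank at most n, there exists x ∈ ℂ^m with ‖x‖₁ ≤ 1 such that ‖x − T_n x‖₂ ≥ ((m − n)/m)^{1/2}. -/
open Finset

/-- the result \eqref{eq:Glus} of Gluskin: for `m > n` and any linear
map `T : ℂ^m → ℂ^m` of rank at most `n`, there is `x ∈ ℂ^m` with `‖x‖₁ ≤ 1` and
`‖x − Tx‖₂ ≥ ((m−n)/m)^{1/2}`. -/
theorem statement14 :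
    ∀ (m n : ℕ), n < m →
      ∀ T : (Fin m → ℂ) →ₗ[ℂ] (Fin m → ℂ),
        Module.rank ℂ (LinearMap.range T) ≤ n →
        ∃ x : Fin m → ℂ,
          (∑ j, ‖x j‖) ≤ 1 ∧
          Real.sqrt (((m : ℝ) - n) / m) ≤ Real.sqrt (∑ j, ‖x j - T x j‖ ^ 2) := by
  intro m n hmn T hT
  let e := (WithLp.linearEquiv 2 ℂ (Fin m → ℂ)).symm
  let R : Submodule ℂ (EuclideanSpace ℂ (Fin m)) :=
    (LinearMap.range T).map e.toLinearMap
  have hR : Module.finrank ℂ R ≤ n := by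
    have h1 : Module.finrank ℂ R = Module.finrank ℂ (LinearMap.range T) :=
      LinearEquiv.finrank_map_eq e _
    rw [h1]
    exact Module.finrank_le_of_rank_le hT
  have hK : m - n ≤ Module.finrank ℂ Rᗮ := by
    have := R.finrank_add_finrank_orthogonal
    rw [finrank_euclideanSpace_fin] at this
    omega
  let b := stdOrthonormalBasis ℂ Rᗮ
  have hb : Orthonormal ℂ (fun k => (b k : EuclideanSpace ℂ (Fin m))) :=
    b.orthonormal.comp_linearIsometry (Rᗮ).subtypeₗᵢ
  have key : ∀ i : Fin m, ∑ k, ‖(b k : EuclideanSpace ℂ (Fin m)) i‖ ^ 2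
      ≤ ∑ j, ‖(Pi.single i 1 : Fin m → ℂ) j - T (Pi.single i 1) j‖ ^ 2 := by
    intro i
    have h := hb.sum_inner_products_le
      (x := EuclideanSpace.single i (1 : ℂ) - e (T (Pi.single i 1))) (s := univ)
    rw [EuclideanSpace.norm_sq_eq] at h
    refine le_trans (le_of_eq ?_) (h.trans (le_of_eq ?_))
    · refine sum_congr rfl fun k _ => ?_
      have h0 : inner ℂ (b k : EuclideanSpace ℂ (Fin m)) (e (T (Pi.single i 1))) = 0 :=
        Submodule.inner_left_of_mem_orthogonal
          (Submodule.mem_map_of_mem (LinearMap.mem_range_self T _)) (b k).2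
      rw [inner_sub_right, h0, EuclideanSpace.inner_single_right]
      simp
    · refine sum_congr rfl fun j _ => ?_
      simp [e, Pi.single_apply]
  have tot : ((m : ℝ) - n) ≤ ∑ i : Fin m,
      ∑ j, ‖(Pi.single i 1 : Fin m → ℂ) j - T (Pi.single i 1) j‖ ^ 2 := by
    refine le_trans ?_ (sum_le_sum fun i _ => key i)
    rw [sum_comm]
    have : ∀ k, ∑ i, ‖(b k : EuclideanSpace ℂ (Fin m)) i‖ ^ 2 = 1 := by
      intro k
      rw [← EuclideanSpace.norm_sq_eq, hb.1 k, one_pow]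
    simp only [this]
    rw [sum_const, card_univ, Fintype.card_fin, nsmul_eq_mul, mul_one, sub_le_iff_le_add]
    exact_mod_cast (by omega)
  have hm : (0 : ℝ) < m := by exact_mod_cast (by omega : 0 < m)
  have : ∃ i ∈ (univ : Finset (Fin m)), ((m : ℝ) - n) / m ≤
      ∑ j, ‖(Pi.single i 1 : Fin m → ℂ) j - T (Pi.single i 1) j‖ ^ 2 := by
    refine exists_le_of_sum_le ⟨⟨0, by omega⟩, mem_univ _⟩ (le_trans (le_of_eq ?_) tot)
    rw [sum_const, card_univ, Fintype.card_fin, nsmul_eq_mul]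
    field_simp
  obtain ⟨i, -, hi⟩ := this
  refine ⟨Pi.single i 1, ?_, Real.sqrt_le_sqrt hi⟩
  rw [sum_eq_single i]
  · simp
  · intro j _ hj
    simp [hj]
  · simp
end
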